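/- arXiv:1806.09909 — 2 statements merged into one kernel-verified Lean document; each statement's English description precedes it below -/
import Mathlib

section
/- (Lemma 1.2.1) Fix d ≥ 1 and 0 ≤ r ≤ d−1. Then GSp_{2d}(𝔸_f) = P_r(ℚ)·Q_r(𝔸_f)·GSp_{2d}(Ẑ): every g ∈ GSp_{2d}(𝔸_f) can be written g = p·q·k with p ∈ P_r(ℚ), q ∈ Q_r(𝔸_f) and k ∈ GSp_{2d}(Ẑ). Equivalently, the double quotient P_r(ℚ)Q_r(𝔸_f) \ GSp_{2d}(𝔸_f) / GSp_{2d}(Ẑ) is a singleton. -/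
open Matrix
open scoped TensorProduct

noncomputable section

/-- The profinite completion `Ẑ` of `ℤ`, as the inverse limit of the rings `ℤ/nℤ`. -/
def ZHat : Subring (∀ n : ℕ+, ZMod (n : ℕ)) where
  carrier := {x | ∀ (m k : ℕ+) (h : (m : ℕ) ∣ (k : ℕ)), ZMod.castHom h (ZMod (m : ℕ)) (x k) = x m}
  zero_mem' := by intro m k h; simp only [Pi.zero_apply, _root_.map_zero]
  one_mem' := by intro m k h; simp only [Pi.one_apply, _root_.map_one]
  add_mem' := by intro a b ha hb m k h; simp only [Pi.add_apply, _root_.map_add, ha m k h, hb m k h]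
  mul_mem' := by intro a b ha hb m k h; simp only [Pi.mul_apply, _root_.map_mul, ha m k h, hb m k h]
  neg_mem' := by intro a ha m k h; simp only [Pi.neg_apply, _root_.map_neg, ha m k h]

/-- Reduction modulo `n`, as a ring homomorphism `Ẑ → ℤ/nℤ`. -/
def projZHat (n : ℕ+) : ↥ZHat →+* ZMod (n : ℕ) :=
  (Pi.evalRingHom (fun k : ℕ+ => ZMod (k : ℕ)) n).comp ZHat.subtype

/-- The ring of finite adeles of `ℚ`, presented as `Ẑ ⊗_ℤ ℚ`. -/
abbrev AQf : Type := ↥ZHat ⊗[ℤ] ℚ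

/-- The inclusion `Ẑ → 𝔸_f`. -/
def zhatToA : ↥ZHat →+* AQf := Algebra.TensorProduct.includeLeftRingHom

/-- The diagonal inclusion `ℚ → 𝔸_f`. -/
def ratToA : ℚ →+* AQf := (Algebra.TensorProduct.includeRight).toRingHom

/-- Functoriality of `GL_m` in the ring. -/
def glMap {m : ℕ} {R S : Type*} [CommRing R] [CommRing S] (f : R →+* S) :
    GL (Fin m) R →* GL (Fin m) S :=
  Units.map (f.mapMatrix : Matrix (Fin m) (Fin m) R →+* Matrix (Fin m) (Fin m) S).toMonoidHom

/-- The `d × d` antidiagonal matrix `J_d`. -/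
def Jmat (d : ℕ) (R : Type*) [CommRing R] : Matrix (Fin d) (Fin d) R :=
  Matrix.of fun i j => if (i : ℕ) + (j : ℕ) + 1 = d then 1 else 0

/-- The standard symplectic similitude form `J_{d,d} = [[0, J_d], [-J_d, 0]]`. -/
def Jsymp (d : ℕ) (R : Type*) [CommRing R] : Matrix (Fin (2 * d)) (Fin (2 * d)) R :=
  Matrix.of fun i j =>
    if (i : ℕ) + (j : ℕ) + 1 = 2 * d then (if (i : ℕ) < d then 1 else -1) else 0

private lemma conj_aux {n : ℕ} {R : Type*} [CommRing R]
    (A B J : Matrix (Fin n) (Fin n) R) :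
    Bᵀ * (Aᵀ * J * A) * B = (A * B)ᵀ * J * (A * B) := by
  simp only [Matrix.transpose_mul, Matrix.mul_assoc]

/-- The symplectic similitude group `GSp_{2d}(R)`, with the similitude factor recorded:
pairs `(g, c)` with `ᵗg · J_{d,d} · g = c · J_{d,d}`.  For `d ≥ 1` the similitude `c` is
uniquely determined by `g`. -/
def GSpP (d : ℕ) (R : Type*) [CommRing R] : Subgroup (GL (Fin (2 * d)) R × Rˣ) where
  carrier := {x | ((x.1 : Matrix (Fin (2 * d)) (Fin (2 * d)) R))ᵀ * Jsymp d R *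
      (x.1 : Matrix (Fin (2 * d)) (Fin (2 * d)) R) = ((x.2 : Rˣ) : R) • Jsymp d R}
  one_mem' := by
    simp only [Set.mem_setOf_eq, Prod.fst_one, Prod.snd_one, Units.val_one, one_smul]
    simp
  mul_mem' := by
    intro a b ha hb
    simp only [Set.mem_setOf_eq] at ha hb ⊢
    have h1 : ((a * b).1 : Matrix (Fin (2 * d)) (Fin (2 * d)) R)
        = (a.1 : Matrix (Fin (2 * d)) (Fin (2 * d)) R) *
          (b.1 : Matrix (Fin (2 * d)) (Fin (2 * d)) R) := rfl
    have h2 : (((a * b).2 : Rˣ) : R) = ((a.2 : Rˣ) : R) * ((b.2 : Rˣ) : R) := rfl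
    rw [h1, h2, ← conj_aux, ha, Matrix.mul_smul, Matrix.smul_mul, hb, smul_smul]
  inv_mem' := by
    intro a ha
    simp only [Set.mem_setOf_eq] at ha ⊢
    have h1 : ((a⁻¹).1 : Matrix (Fin (2 * d)) (Fin (2 * d)) R)
        = (((a.1)⁻¹ : GL (Fin (2 * d)) R) : Matrix (Fin (2 * d)) (Fin (2 * d)) R) := rfl
    have h2 : (((a⁻¹).2 : Rˣ) : R) = (((a.2)⁻¹ : Rˣ) : R) := rfl
    have hJ : Jsymp d R = (((a.2)⁻¹ : Rˣ) : R) •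
        ((a.1 : Matrix (Fin (2 * d)) (Fin (2 * d)) R)ᵀ * Jsymp d R *
          (a.1 : Matrix (Fin (2 * d)) (Fin (2 * d)) R)) := by
      rw [ha, smul_smul, ← Units.val_mul, inv_mul_cancel, Units.val_one, one_smul]
    rw [h1, h2]
    conv_lhs => rw [hJ]
    rw [Matrix.mul_smul, Matrix.smul_mul, conj_aux, Units.mul_inv]
    simp

/-- The symplectic similitude group `GSp_{2d}(R)` as a matrix group. -/
def GSp (d : ℕ) (R : Type*) [CommRing R] : Subgroup (GL (Fin (2 * d)) R) :=
  (GSpP d R).map (MonoidHom.fst _ _)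

/-- Index of the block (of sizes `d-r`, `2r`, `d-r`) that the `i`-th coordinate belongs to. -/
def blk (d r : ℕ) (i : ℕ) : ℕ := if i < d - r then 0 else if i < d + r then 1 else 2

/-- The standard maximal parabolic subgroup `P_r` of `GSp_{2d}`:
elements of `GSp_{2d}` that are block upper triangular for the partition `(d-r, 2r, d-r)`. -/
def PrSet (d r : ℕ) (R : Type*) [CommRing R] : Set (GL (Fin (2 * d)) R) :=
  {g | g ∈ GSp d R ∧
    ∀ i j : Fin (2 * d), blk d r (j : ℕ) < blk d r (i : ℕ) →
      (g : Matrix (Fin (2 * d)) (Fin (2 * d)) R) i j = 0}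

/-- The unipotent radical `N_r` of `P_r`: block upper triangular elements of `GSp_{2d}`
whose diagonal blocks are identity matrices. -/
def NrSet (d r : ℕ) (R : Type*) [CommRing R] : Set (GL (Fin (2 * d)) R) :=
  {g | g ∈ GSp d R ∧
    (∀ i j : Fin (2 * d), blk d r (j : ℕ) < blk d r (i : ℕ) →
      (g : Matrix (Fin (2 * d)) (Fin (2 * d)) R) i j = 0) ∧
    (∀ i j : Fin (2 * d), blk d r (i : ℕ) = blk d r (j : ℕ) →
      (g : Matrix (Fin (2 * d)) (Fin (2 * d)) R) i j = if i = j then 1 else 0)}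

/-- The subgroup `Q_r` of `P_r`: block upper triangular elements of `GSp_{2d}` with
last diagonal block the identity and first diagonal block the similitude times the identity. -/
def QrSet (d r : ℕ) (R : Type*) [CommRing R] : Set (GL (Fin (2 * d)) R) :=
  {g | ∃ c : Rˣ,
    (g : Matrix (Fin (2 * d)) (Fin (2 * d)) R)ᵀ * Jsymp d R *
      (g : Matrix (Fin (2 * d)) (Fin (2 * d)) R) = (c : R) • Jsymp d R ∧
    (∀ i j : Fin (2 * d), blk d r (j : ℕ) < blk d r (i : ℕ) →
      (g : Matrix (Fin (2 * d)) (Fin (2 * d)) R) i j = 0) ∧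
    (∀ i j : Fin (2 * d), blk d r (i : ℕ) = 0 → blk d r (j : ℕ) = 0 →
      (g : Matrix (Fin (2 * d)) (Fin (2 * d)) R) i j = if i = j then (c : R) else 0) ∧
    (∀ i j : Fin (2 * d), blk d r (i : ℕ) = 2 → blk d r (j : ℕ) = 2 →
      (g : Matrix (Fin (2 * d)) (Fin (2 * d)) R) i j = if i = j then 1 else 0)}

/-- The linear part `L_{ℓ,r}` of the Levi quotient of `P_r`: block diagonal symplectic
(similitude `1`) matrices with middle block the identity. -/
def LlrSet (d r : ℕ) (R : Type*) [CommRing R] : Set (GL (Fin (2 * d)) R) :=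
  {g | (g : Matrix (Fin (2 * d)) (Fin (2 * d)) R)ᵀ * Jsymp d R *
      (g : Matrix (Fin (2 * d)) (Fin (2 * d)) R) = Jsymp d R ∧
    (∀ i j : Fin (2 * d), blk d r (i : ℕ) ≠ blk d r (j : ℕ) →
      (g : Matrix (Fin (2 * d)) (Fin (2 * d)) R) i j = 0) ∧
    (∀ i j : Fin (2 * d), blk d r (i : ℕ) = 1 → blk d r (j : ℕ) = 1 →
      (g : Matrix (Fin (2 * d)) (Fin (2 * d)) R) i j = if i = j then 1 else 0)}

/-- `P_r(ℚ)`, viewed inside `GL_{2d}(𝔸_f)`. -/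
def PrQinA (d r : ℕ) : Set (GL (Fin (2 * d)) AQf) := (glMap ratToA) '' (PrSet d r ℚ)

/-- `L_{ℓ,r}(ℚ)`, viewed inside `GL_{2d}(𝔸_f)`. -/
def LlrQinA (d r : ℕ) : Set (GL (Fin (2 * d)) AQf) := (glMap ratToA) '' (LlrSet d r ℚ)

/-- `GSp_{2d}(Ẑ)`, viewed inside `GL_{2d}(𝔸_f)`. -/
def GSpZinA (d : ℕ) : Subgroup (GL (Fin (2 * d)) AQf) := (GSp d ↥ZHat).map (glMap zhatToA)

/-- The principal congruence subgroup `K_d(n) = Ker(GSp_{2d}(Ẑ) → GSp_{2d}(ℤ/nℤ))`. -/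
def KdZ (d : ℕ) (n : ℕ+) : Subgroup (GL (Fin (2 * d)) ↥ZHat) :=
  GSp d ↥ZHat ⊓ (glMap (projZHat n)).ker

/-- The principal congruence subgroup `K_d(n)`, viewed inside `GL_{2d}(𝔸_f)`. -/
def KdA (d : ℕ) (n : ℕ+) : Subgroup (GL (Fin (2 * d)) AQf) := (KdZ d n).map (glMap zhatToA)

namespace GSpProof

lemma zhat_compat (x : ↥ZHat) (m k : ℕ+) (h : (m : ℕ) ∣ (k : ℕ)) :
    ZMod.castHom h (ZMod (m : ℕ)) (x.1 k) = x.1 m := x.2 m k h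

lemma zhat_ext {x y : ↥ZHat} (h : ∀ n, x.1 n = y.1 n) : x = y := Subtype.ext (funext h)

lemma zhat_natCast (N : ℕ) (n : ℕ+) : ((N : ↥ZHat).1 n) = (N : ZMod (n : ℕ)) := by
  have : (projZHat n) (N : ↥ZHat) = (N : ZMod (n : ℕ)) := map_natCast _ _
  exact this

lemma zhat_intCast (N : ℤ) (n : ℕ+) : ((N : ↥ZHat).1 n) = (N : ZMod (n : ℕ)) := by
  have : (projZHat n) (N : ↥ZHat) = (N : ZMod (n : ℕ)) := map_intCast _ _
  exact this

/-- the kernel of reduction modulo `N` is `N Ẑ` -/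
lemma zhat_dvd (N : ℕ+) (x : ↥ZHat) (hx : x.1 N = 0) : ∃ z : ↥ZHat, x = ((N : ℕ) : ↥ZHat) * z := by
  have h1 : ∀ n : ℕ+, ∃ a : ℤ, x.1 (n * N) = (a : ZMod ((n * N : ℕ+) : ℕ)) :=
    fun n => ⟨_, (ZMod.intCast_surjective (x.1 (n * N))).choose_spec.symm⟩
  choose A hA using h1
  have h2 : ∀ n : ℕ+, ∃ b : ℤ, A n = (N : ℕ) * b := by
    intro n
    have h := zhat_compat x N (n * N) (by simp)
    rw [hA, map_intCast, hx] at h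
    exact (ZMod.intCast_zmod_eq_zero_iff_dvd _ _).1 h
  choose B hB using h2
  refine ⟨⟨fun n => (B n : ZMod (n : ℕ)), ?_⟩, ?_⟩
  · intro m k h
    have hd : ((m * N : ℕ+) : ℕ) ∣ ((k * N : ℕ+) : ℕ) := by
      simpa using Nat.mul_dvd_mul_right h N
    have h3 := zhat_compat x (m * N) (k * N) hd
    rw [hA, hA, map_intCast, ZMod.intCast_eq_intCast_iff_dvd_sub, hB, hB] at h3
    simp only [map_intCast]
    rw [ZMod.intCast_eq_intCast_iff_dvd_sub]
    have hN : (N : ℤ) ≠ 0 := by exact_mod_cast N.pos.ne'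
    have : (((m : ℕ) : ℤ) * N) ∣ (B m - B k) * N := by
      convert h3 using 1
      · simp
      · ring
    exact (mul_dvd_mul_iff_right hN).1 this
  · apply zhat_ext
    intro n
    have h := zhat_compat x n (n * N) (by simp)
    rw [hA, map_intCast, hB] at h
    change x.1 n = ((N : ℕ) : ↥ZHat).1 n * (B n : ZMod (n : ℕ))
    rw [zhat_natCast, ← h]
    push_cast; rfl

lemma zhat_torsion (N : ℕ) (hN : 0 < N) (x : ↥ZHat) (hx : (N : ↥ZHat) * x = 0) : x = 0 := by
  apply zhat_ext
  intro n
  let N' : ℕ+ := ⟨N, hN⟩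
  obtain ⟨a, ha⟩ := ZMod.intCast_surjective (x.1 (n * N'))
  have h := zhat_compat x n (n * N') (by simp)
  have h1 : (N : ZMod ((n * N' : ℕ+) : ℕ)) * x.1 (n * N') = 0 := by
    rw [← zhat_natCast]
    exact congrFun (congrArg Subtype.val hx) (n * N')
  rw [← ha] at h h1
  have h2 : ((((n * N' : ℕ+) : ℕ) : ℕ) : ℤ) ∣ N * a := by
    rw [← ZMod.intCast_zmod_eq_zero_iff_dvd, Int.cast_mul, Int.cast_natCast]; exact h1
  have h3 : ((n : ℕ) : ℤ) * N ∣ a * N := by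
    convert h2 using 1
    · rw [PNat.mul_coe, Nat.cast_mul]; rfl
    · ring
  have hN' : (N : ℤ) ≠ 0 := by exact_mod_cast hN.ne'
  rw [← h, map_intCast]
  exact (ZMod.intCast_zmod_eq_zero_iff_dvd _ _).2 ((mul_dvd_mul_iff_right hN').1 h3)

lemma pow_stab (n : ℕ) (hn : 0 < n) (a : ZMod n) (c : ℕ) (hc : 0 < c) :
    a ^ (n.factorial * c) = a ^ n.factorial := by
  have : NeZero n := ⟨hn.ne'⟩
  obtain ⟨x, y, hxy, he⟩ := Fintype.exists_ne_map_eq_of_card_lt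
    (fun i : Fin (n + 1) => a ^ (i : ℕ)) (by simp [ZMod.card])
  wlog hlt : x < y generalizing x y
  · exact this y x hxy.symm he.symm (lt_of_le_of_ne (not_lt.1 hlt) hxy.symm)
  obtain ⟨t, ht⟩ := Nat.exists_eq_add_of_lt (show (x : ℕ) < y from hlt)
  have hstep : ∀ q s, (x : ℕ) ≤ s → a ^ (s + (t + 1) * q) = a ^ s := by
    intro q s hs
    induction q with
    | zero => simp
    | succ q ih =>
      obtain ⟨w, hw⟩ := Nat.exists_eq_add_of_le hs
      rw [← ih]
      have he' : a ^ (x : ℕ) = a ^ (y : ℕ) := he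
      have e1 : s + (t + 1) * (q + 1) = y + (w + (t + 1) * q) := by rw [hw, ht]; ring
      have e2 : s + (t + 1) * q = x + (w + (t + 1) * q) := by rw [hw]; ring
      rw [e1, e2, pow_add a (y : ℕ), pow_add a (x : ℕ), he']
  have hyl : (y : ℕ) ≤ n := Nat.lt_succ_iff.1 y.2
  have hdvd : (t + 1) ∣ n.factorial := Nat.dvd_factorial (by omega) (by omega)
  have hself := Nat.self_le_factorial n
  obtain ⟨e, he2⟩ := hdvd
  obtain ⟨c', rfl⟩ : ∃ c', c = c' + 1 := ⟨c - 1, by omega⟩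
  have : n.factorial * (c' + 1) = n.factorial + (t + 1) * (e * c') := by
    rw [mul_add, ← mul_assoc, ← he2]; ring
  rw [this, hstep _ _ (by omega)]

lemma zhat_isUnit (x : ↥ZHat) (h : ∀ n, IsUnit (x.1 n)) : IsUnit x := by
  choose u hu using h
  refine IsUnit.of_mul_eq_one ⟨fun n => ((u n)⁻¹ : (ZMod (n : ℕ))ˣ), ?_⟩ ?_
  · intro m k hmk
    have h1 := zhat_compat x m k hmk
    rw [← hu, ← hu] at h1
    have h2 : Units.map (ZMod.castHom hmk (ZMod (m : ℕ))).toMonoidHom (u k) = u m := Units.ext h1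
    change ((Units.map (ZMod.castHom hmk (ZMod (m : ℕ))).toMonoidHom (u k)⁻¹ : (ZMod (m : ℕ))ˣ) : ZMod (m : ℕ)) = _
    rw [map_inv, h2]
  · apply zhat_ext
    intro n
    change x.1 n * _ = 1
    rw [← hu]; simp

/-- stable range one -/
lemma zhat_sr (a b : ↥ZHat) (h : ∃ u w, u * a + w * b = 1) : ∃ x, IsUnit (a + x * b) := by
  obtain ⟨u, w, h⟩ := h
  refine ⟨⟨fun n => 1 - a.1 n ^ (n : ℕ).factorial, ?_⟩, ?_⟩
  · intro m k hmk
    rw [map_sub, map_one, map_pow, zhat_compat a m k hmk]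
    obtain ⟨c, hc⟩ := Nat.factorial_dvd_factorial (Nat.le_of_dvd k.pos hmk)
    rw [hc, pow_stab _ m.pos]
    have := Nat.factorial_pos (k : ℕ)
    rw [hc] at this
    exact Nat.pos_of_mul_pos_left this
  · apply zhat_isUnit
    intro n
    change IsUnit (a.1 n + (1 - a.1 n ^ (n : ℕ).factorial) * b.1 n)
    have h1 : u.1 n * a.1 n + w.1 n * b.1 n = 1 := congrFun (congrArg Subtype.val h) n
    have h2 := pow_stab n n.pos (a.1 n) 2 (by norm_num)
    have h3 : (n : ℕ).factorial ≠ 0 := (Nat.factorial_pos _).ne'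
    generalize a.1 n = a at *
    generalize b.1 n = b at *
    by_contra hu
    obtain ⟨P, hP, hmem⟩ := exists_max_ideal_of_mem_nonunits hu
    have hPp := hP.isPrime
    by_cases ha : a ∈ P
    · have hf : a ^ (n : ℕ).factorial ∈ P := Ideal.pow_mem_of_mem _ ha _ (Nat.pos_of_ne_zero h3)
      have hb : b ∈ P := by
        have : b = (a + (1 - a ^ (n : ℕ).factorial) * b) - a + b * a ^ (n : ℕ).factorial := by ring
        rw [this]
        exact P.add_mem (P.sub_mem hmem ha) (P.mul_mem_left _ hf)
      exact hPp.ne_top ((Ideal.eq_top_iff_one _).2 (h1 ▸ P.add_mem (P.mul_mem_left _ ha) (P.mul_mem_left _ hb)))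
    · have hf : a ^ (n : ℕ).factorial ∉ P := fun hh => ha (hPp.mem_of_pow_mem _ hh)
      have h4 : a ^ (n : ℕ).factorial * (1 - a ^ (n : ℕ).factorial) ∈ P := by
        have : a ^ (n : ℕ).factorial * (1 - a ^ (n : ℕ).factorial) = 0 := by
          rw [mul_sub, mul_one, ← pow_add, ← mul_two, h2, sub_self]
        rw [this]; exact P.zero_mem
      have h5 := (hPp.mem_or_mem h4).resolve_left hf
      have : a = (a + (1 - a ^ (n : ℕ).factorial) * b) - b * (1 - a ^ (n : ℕ).factorial) := by ring
      exact ha (this ▸ P.sub_mem hmem (P.mul_mem_left _ h5))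

lemma zhat_prime_unit (p : ℕ+) (hp : (p : ℕ).Prime) (x : ↥ZHat) (hx : x.1 p ≠ 0) :
    ∃ s : ℤ, (s : ZMod (p : ℕ)) * x.1 p = 1 := by
  have : Fact (p : ℕ).Prime := ⟨hp⟩
  obtain ⟨s, hs⟩ := ZMod.intCast_surjective (x.1 p)⁻¹
  exact ⟨s, by rw [hs, inv_mul_cancel₀ hx]⟩

lemma zhat_lift (N : ℕ+) (z : ↥ZHat) : ∃ (a : ℤ) (y : ↥ZHat), z = a + ((N : ℕ) : ↥ZHat) * y := by
  obtain ⟨a, ha⟩ := ZMod.intCast_surjective (z.1 N)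
  obtain ⟨y, hy⟩ := zhat_dvd N (z - a) (by
    change z.1 N - (a : ↥ZHat).1 N = 0
    rw [zhat_intCast, ha, sub_self])
  exact ⟨a, y, by rw [← hy]; ring⟩

lemma zhat_primitive {n : ℕ} (M : ℕ) : 0 < M → ∀ (w : Fin n → ↥ZHat), (∃ y : Fin n → ↥ZHat, ∑ a, w a * y a = (M : ↥ZHat)) →
    ∃ D : ℕ, 0 < D ∧ ∃ w' : Fin n → ↥ZHat, (∀ a, w a = (D : ↥ZHat) * w' a) ∧
      ∃ y : Fin n → ↥ZHat, ∑ a, w' a * y a = 1 := by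
  induction M using Nat.strong_induction_on with
  | _ M ih =>
  intro hM w ⟨y, hy⟩
  by_cases h1 : M = 1
  · exact ⟨1, one_pos, w, by simp, y, by simp [hy, h1]⟩
  obtain ⟨p, hp, M', rfl⟩ := Nat.exists_prime_and_dvd h1
  have hM' : 0 < M' := Nat.pos_of_mul_pos_left hM
  have hlt : M' < p * M' := by nlinarith [hp.two_le]
  let p' : ℕ+ := ⟨p, hp.pos⟩
  have : Fact p.Prime := ⟨hp⟩
  by_cases hall : ∀ a, (w a).1 p' = 0
  · choose w' hw' using fun a => zhat_dvd p' (w a) (hall a)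
    have : ∑ a, w' a * y a = (M' : ↥ZHat) := by
      have : (p : ↥ZHat) * (∑ a, w' a * y a - (M' : ↥ZHat)) = 0 := by
        rw [mul_sub, Finset.mul_sum, sub_eq_zero]
        push_cast at hy
        rw [← hy]
        refine Finset.sum_congr rfl fun a _ => ?_
        rw [hw' a]; simp only [p', PNat.mk_coe]; ring
      exact sub_eq_zero.1 (zhat_torsion p hp.pos _ this)
    obtain ⟨D, hD, w'', h2, h3⟩ := ih M' hlt hM' w' ⟨y, this⟩
    refine ⟨p * D, Nat.mul_pos hp.pos hD, w'', fun a => ?_, h3⟩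
    rw [hw' a, h2 a]; simp only [p', PNat.mk_coe]; push_cast; ring
  · push Not at hall
    obtain ⟨a₀, ha₀⟩ := hall
    have hu := zhat_prime_unit p' hp (w a₀) ha₀
    obtain ⟨s, hs⟩ := hu
    obtain ⟨z, hz⟩ := zhat_dvd p' (1 - (s : ↥ZHat) * w a₀) (by
      change 1 - (s : ↥ZHat).1 p' * (w a₀).1 p' = 0
      rw [zhat_intCast]; exact sub_eq_zero.2 hs.symm)
    refine ih M' hlt hM' w ⟨fun a => z * y a + if a = a₀ then (s : ↥ZHat) * (M' : ↥ZHat) else 0, ?_⟩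
    have : ∑ a, w a * (z * y a + if a = a₀ then (s : ↥ZHat) * M' else 0)
        = z * ∑ a, w a * y a + w a₀ * (s * M') := by
      simp only [mul_add, Finset.sum_add_distrib, Finset.mul_sum]
      congr 1
      · exact Finset.sum_congr rfl fun a _ => by ring
      · simp
    rw [this, hy]
    simp only [p', PNat.mk_coe] at hz
    push_cast
    linear_combination (-(M' : ↥ZHat)) * hz

lemma ratToA_natCast (N : ℕ) : ratToA N = (N : AQf) := map_natCast _ _

lemma A_denom (x : AQf) : ∃ N : ℕ, 0 < N ∧ ∃ z : ↥ZHat, (N : AQf) * x = zhatToA z := by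
  induction x using TensorProduct.induction_on with
  | zero => exact ⟨1, one_pos, 0, by simp⟩
  | tmul z q =>
    refine ⟨q.den, q.pos, z * q.num, ?_⟩
    have e : z ⊗ₜ[ℤ] q = zhatToA z * ratToA q := by
      simp [zhatToA, ratToA]
    rw [e, ← ratToA_natCast, map_mul, mul_left_comm, ← map_mul, map_intCast, ← map_intCast ratToA]
    congr 2
    rw [mul_comm]; exact Rat.mul_den_eq_num q
  | add x y hx hy =>
    obtain ⟨N, hN, z, hz⟩ := hx
    obtain ⟨M, hM, w, hw⟩ := hy
    refine ⟨N * M, by positivity, M * z + N * w, ?_⟩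
    rw [map_add, map_mul, map_mul, map_natCast, map_natCast, ← hz, ← hw]; push_cast; ring

lemma A_denoms {n : ℕ} (x : Fin n → AQf) :
    ∃ N : ℕ, 0 < N ∧ ∃ z : Fin n → ↥ZHat, ∀ a, (N : AQf) * x a = zhatToA (z a) := by
  choose N hN z hz using fun a => A_denom (x a)
  refine ⟨∏ a, N a, Finset.prod_pos fun a _ => hN a,
    fun a => (∏ b ∈ Finset.univ.erase a, (N b : ↥ZHat)) * z a, fun a => ?_⟩
  rw [map_mul, ← hz, map_prod, ← Finset.prod_erase_mul _ _ (Finset.mem_univ a)]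
  simp only [map_natCast]
  push_cast; ring

lemma zhatToA_inj : Function.Injective zhatToA := by
  have : Module.IsTorsionFree ℤ ↥ZHat := by
    refine Module.IsTorsionFree.of_smul_eq_zero fun r m h => ?_
    by_cases hr : r = 0
    · exact Or.inl hr
    · right
      apply zhat_torsion r.natAbs (Int.natAbs_pos.2 hr)
      rcases Int.natAbs_eq r with h' | h' <;> rw [h'] at h <;> simpa using h
  exact Algebra.TensorProduct.includeLeft_injective (S := ℤ) (R := ℤ) (A := ↥ZHat) (B := ℚ) (Int.cast_injective)

lemma ratToA_inv (N : ℕ) (hN : 0 < N) : ratToA (N : ℚ)⁻¹ * (N : AQf) = 1 := by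
  rw [← ratToA_natCast, ← map_mul, inv_mul_cancel₀ (by positivity), map_one]

lemma A_split (x : AQf) : ∃ (q : ℚ) (z : ↥ZHat), x = ratToA q + zhatToA z := by
  obtain ⟨N, hN, z, hz⟩ := A_denom x
  obtain ⟨a, y, hz'⟩ := zhat_lift ⟨N, hN⟩ z
  refine ⟨(N : ℚ)⁻¹ * a, y, ?_⟩
  have h1 := ratToA_inv N hN
  simp only [PNat.mk_coe] at hz'
  rw [hz', map_add, map_mul, map_natCast, map_intCast] at hz
  rw [map_mul, map_intCast]
  linear_combination (ratToA (N : ℚ)⁻¹) * hz + (-x + zhatToA y) * h1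

lemma A_primitive {n : ℕ} (v : Fin n → AQf) (h : ∃ y : Fin n → AQf, ∑ a, v a * y a = 1) :
    ∃ t : ℚ, t ≠ 0 ∧ ∃ w : Fin n → ↥ZHat, (∀ a, v a = ratToA t * zhatToA (w a)) ∧
      ∃ y : Fin n → ↥ZHat, ∑ a, w a * y a = 1 := by
  obtain ⟨y, hy⟩ := h
  obtain ⟨N, hN, w, hw⟩ := A_denoms v
  obtain ⟨M, hM, y', hy'⟩ := A_denoms y
  have h1 : ∑ a, w a * y' a = ((N * M : ℕ) : ↥ZHat) := by
    apply zhatToA_inj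
    rw [map_sum, map_natCast]
    push_cast
    rw [← mul_one ((N : AQf) * M), ← hy, Finset.mul_sum]
    refine Finset.sum_congr rfl fun a _ => ?_
    rw [map_mul, ← hw, ← hy']; ring
  obtain ⟨D, hD, w', h2, h3⟩ := zhat_primitive (N * M) (by positivity) w ⟨y', h1⟩
  refine ⟨(N : ℚ)⁻¹ * D, by positivity, w', fun a => ?_, h3⟩
  have h4 := hw a
  rw [h2 a, map_mul, map_natCast] at h4
  rw [map_mul, ratToA_natCast]
  linear_combination (-v a) * ratToA_inv N hN + ratToA (N : ℚ)⁻¹ * h4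


section Symp

variable {d : ℕ} {R : Type*} [CommRing R]

/-- the sign `ε_i = ±1` -/
def eps (R : Type*) [CommRing R] {d : ℕ} (i : Fin (2 * d)) : R := if (i : ℕ) < d then 1 else -1

lemma eps_sq (i : Fin (2 * d)) : eps R i * eps R i = 1 := by
  unfold eps; split_ifs <;> simp

lemma eps_rev (i : Fin (2 * d)) : eps R (Fin.rev i) = - eps R i := by
  have := i.2
  unfold eps; rw [Fin.val_rev]; split_ifs <;> first | omega | simp

lemma rev_ne (i : Fin (2 * d)) : Fin.rev i ≠ i := by
  intro h
  have := congrArg Fin.val h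
  rw [Fin.val_rev] at this
  omega

lemma Jsymp_apply' (i k : Fin (2 * d)) :
    Jsymp d R i k = if k = Fin.rev i then eps R i else 0 := by
  have h : ((i : ℕ) + (k : ℕ) + 1 = 2 * d) ↔ k = Fin.rev i := by
    rw [Fin.ext_iff, Fin.val_rev]; omega
  simp only [Jsymp, Matrix.of_apply, h, eps]

/-- the bilinear form -/
def B (x y : Fin (2 * d) → R) : R := x ⬝ᵥ (Jsymp d R *ᵥ y)

lemma B_eq (x y : Fin (2 * d) → R) : B x y = ∑ a, x a * (eps R a * y (Fin.rev a)) := by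
  unfold B dotProduct mulVec dotProduct
  refine Finset.sum_congr rfl fun a _ => ?_
  simp [Jsymp_apply']

lemma B_add_left (x y z : Fin (2 * d) → R) : B (x + y) z = B x z + B y z := by
  unfold B; rw [add_dotProduct]
lemma B_add_right (x y z : Fin (2 * d) → R) : B x (y + z) = B x y + B x z := by
  unfold B; rw [mulVec_add, dotProduct_add]
lemma B_smul_left (c : R) (x y : Fin (2 * d) → R) : B (c • x) y = c * B x y := by
  unfold B; rw [smul_dotProduct, smul_eq_mul]
lemma B_smul_right (c : R) (x y : Fin (2 * d) → R) : B x (c • y) = c * B x y := by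
  unfold B; rw [mulVec_smul, dotProduct_smul, smul_eq_mul]
lemma B_self (x : Fin (2 * d) → R) : B x x = 0 := by
  rw [B_eq]
  refine Finset.sum_involution (fun a _ => Fin.rev a) ?_ ?_ ?_ ?_
  · intro a _
    rw [Fin.rev_rev, eps_rev]; ring
  · intro a _ _; exact rev_ne a
  · intro a _; exact Finset.mem_univ _
  · intro a _; exact Fin.rev_rev a
lemma B_anti (x y : Fin (2 * d) → R) : B y x = - B x y := by
  have h := B_self (x + y)
  rw [B_add_left, B_add_right, B_add_right, B_self, B_self] at h
  linear_combination h
lemma B_single_left (k : Fin (2 * d)) (y : Fin (2 * d) → R) :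
    B (Pi.single k 1) y = eps R k * y (Fin.rev k) := by
  rw [B_eq, Finset.sum_eq_single k] <;> simp +contextual [Pi.single_apply]
lemma B_single_right (k : Fin (2 * d)) (y : Fin (2 * d) → R) :
    B y (Pi.single k 1) = y (Fin.rev k) * eps R (Fin.rev k) := by
  rw [B_anti, B_single_left, eps_rev]; ring
lemma B_single_single (i k : Fin (2 * d)) :
    B (Pi.single i 1 : Fin (2 * d) → R) (Pi.single k 1) = Jsymp d R i k := by
  rw [B_single_left, Jsymp_apply', Pi.single_apply]
  simp [eq_comm]

lemma mul_J_apply (M : Matrix (Fin (2 * d)) (Fin (2 * d)) R) (a b : Fin (2 * d)) :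
    (M * Jsymp d R * Mᵀ) a b = B (M a) (M b) := by
  unfold B
  rw [Matrix.mul_assoc, Matrix.mul_apply]
  rfl

lemma J_sq : Jsymp d R * Jsymp d R = -1 := by
  ext a b
  rw [Matrix.mul_apply]
  simp only [Jsymp_apply', Matrix.neg_apply, Matrix.one_apply]
  rw [Finset.sum_eq_single (Fin.rev a)]
  · rw [if_pos rfl, Fin.rev_rev, eps_rev]
    by_cases hab : a = b
    · subst hab; rw [if_pos rfl, if_pos rfl, mul_neg, eps_sq]
    · rw [if_neg hab, if_neg (Ne.symm hab)]; simp
  · intro x _ hx; rw [if_neg hx, zero_mul]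
  · intro hx; exact absurd (Finset.mem_univ _) hx

lemma gsp_comm (M : Matrix (Fin (2 * d)) (Fin (2 * d)) R) (c : Rˣ)
    (h : Mᵀ * Jsymp d R * M = (c : R) • Jsymp d R) : M * Jsymp d R * Mᵀ = (c : R) • Jsymp d R := by
  have h1 : (-(((c⁻¹ : Rˣ) : R) • (Jsymp d R * Mᵀ * Jsymp d R))) * M = 1 := by
    rw [Matrix.neg_mul, Matrix.smul_mul, Matrix.mul_assoc, Matrix.mul_assoc, ← Matrix.mul_assoc Mᵀ, h,
      Matrix.mul_smul, J_sq, smul_smul, Units.inv_mul, one_smul, neg_neg]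
  have h2 := mul_eq_one_comm.1 h1
  have h3 : M * Jsymp d R * Mᵀ * Jsymp d R = - ((c : R) • (1 : Matrix (Fin (2 * d)) (Fin (2 * d)) R)) := by
    rw [← h2, Matrix.mul_neg, Matrix.mul_smul, smul_neg, smul_smul, Units.mul_inv, one_smul, neg_neg]
    simp only [Matrix.mul_assoc]
  have h4 := congrArg (· * Jsymp d R) h3
  simp only [Matrix.mul_assoc, J_sq] at h4
  simpa [Matrix.mul_assoc] using h4

lemma gsp_comm' (M : Matrix (Fin (2 * d)) (Fin (2 * d)) R) (c : Rˣ)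
    (h : M * Jsymp d R * Mᵀ = (c : R) • Jsymp d R) : Mᵀ * Jsymp d R * M = (c : R) • Jsymp d R := by
  have := gsp_comm Mᵀ c (by rwa [Matrix.transpose_transpose])
  rwa [Matrix.transpose_transpose] at this

lemma mem_GSp (g : GL (Fin (2 * d)) R) : g ∈ GSp d R ↔ ∃ c : Rˣ,
    (g : Matrix (Fin (2 * d)) (Fin (2 * d)) R)ᵀ * Jsymp d R *
      (g : Matrix (Fin (2 * d)) (Fin (2 * d)) R) = (c : R) • Jsymp d R := by
  constructor
  · rintro ⟨⟨g', c⟩, h, rfl⟩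
    exact ⟨c, h⟩
  · rintro ⟨c, h⟩
    exact ⟨(g, c), h, rfl⟩

lemma GSp_rows {g : GL (Fin (2 * d)) R} (hg : g ∈ GSp d R) : ∃ c : Rˣ, 
    (g : Matrix (Fin (2 * d)) (Fin (2 * d)) R)ᵀ * Jsymp d R *
      (g : Matrix (Fin (2 * d)) (Fin (2 * d)) R) = (c : R) • Jsymp d R ∧ ∀ a b,
    B ((g : Matrix (Fin (2 * d)) (Fin (2 * d)) R) a) ((g : Matrix (Fin (2 * d)) (Fin (2 * d)) R) b)
      = c * Jsymp d R a b := by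
  obtain ⟨c, hc⟩ := (mem_GSp g).1 hg
  refine ⟨c, hc, fun a b => ?_⟩
  rw [← mul_J_apply, gsp_comm _ c hc]; simp

lemma mk_GSp (M : Matrix (Fin (2 * d)) (Fin (2 * d)) R)
    (h : ∀ a b, B (M a) (M b) = Jsymp d R a b) :
    ∃ g ∈ GSp d R, (g : Matrix (Fin (2 * d)) (Fin (2 * d)) R) = M := by
  have h0 : M * Jsymp d R * Mᵀ = ((1 : Rˣ) : R) • Jsymp d R := by
    ext a b; rw [mul_J_apply, h]; simp
  have h0' := gsp_comm' _ _ h0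
  have h1 : -(Jsymp d R * Mᵀ * Jsymp d R) * M = 1 := by
    rw [Matrix.neg_mul, Matrix.mul_assoc, Matrix.mul_assoc, ← Matrix.mul_assoc Mᵀ, h0']
    simp [J_sq]
  refine ⟨⟨M, _, mul_eq_one_comm.1 h1, h1⟩, ?_, rfl⟩
  rw [mem_GSp]
  exact ⟨1, h0'⟩

lemma transvection (u : Fin (2 * d) → R) (α : R) : ∃ S ∈ GSp d R, ∀ z : Fin (2 * d) → R,
    z ᵥ* (S : Matrix (Fin (2 * d)) (Fin (2 * d)) R) = z + (α * B z u) • u := by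
  let M : Matrix (Fin (2 * d)) (Fin (2 * d)) R := 1 + vecMulVec (Jsymp d R *ᵥ u) (α • u)
  have hM : ∀ z : Fin (2 * d) → R, z ᵥ* M = z + (α * B z u) • u := by
    intro z
    simp only [M, vecMul_add, vecMul_one, vecMul_vecMulVec]
    rw [smul_smul, mul_comm _ α]; rfl
  obtain ⟨g, hg, hgM⟩ := mk_GSp M (by
    intro a b
    have hr : ∀ a, M a = Pi.single a 1 + (α * B (Pi.single a 1) u) • u := fun a => by
      rw [← hM, single_one_vecMul]; rfl
    rw [hr, hr]
    simp only [B_add_left, B_add_right, B_smul_left, B_smul_right, B_self, B_single_single]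
    rw [B_anti (Pi.single b 1) u]; ring)
  exact ⟨g, hg, by rw [hgM]; exact hM⟩

lemma eichler (f x : Fin (2 * d) → R) (hfx : B f x = 0) :
    ∃ S ∈ GSp d R, ∀ a, (S : Matrix (Fin (2 * d)) (Fin (2 * d)) R) a =
      Pi.single a 1 + B (Pi.single a 1) f • x + B (Pi.single a 1) x • f := by
  obtain ⟨g, hg, hgM⟩ := mk_GSp (R := R) (fun a => Pi.single a 1 + B (Pi.single a 1) f • x + B (Pi.single a 1) x • f) (by
    intro a b
    simp only [B_add_left, B_add_right, B_smul_left, B_smul_right, B_self, B_single_single, hfx]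
    rw [B_anti (Pi.single b 1) x, B_anti (Pi.single b 1) f, B_anti f x, hfx]; ring)
  exact ⟨g, hg, fun a => by rw [hgM]⟩

lemma diagSp (t : Fin (2 * d) → R) (h : ∀ a, t a * t (Fin.rev a) = 1) :
    ∃ S ∈ GSp d R, (S : Matrix (Fin (2 * d)) (Fin (2 * d)) R) = Matrix.diagonal t := by
  refine mk_GSp _ fun a b => ?_
  have hr : ∀ a, (Matrix.diagonal t) a = t a • Pi.single a 1 := by
    intro a; ext b
    simp [Matrix.diagonal_apply, Pi.single_apply, eq_comm]
  rw [hr, hr, B_smul_left, B_smul_right, B_single_single, Jsymp_apply']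
  split_ifs with hb
  · subst hb; rw [← mul_assoc, h, one_mul]
  · simp

/-- transitivity of the symplectic group on unimodular vectors, relative to a flag -/
lemma transitive (hsr : ∀ a b : R, (∃ u w, u * a + w * b = 1) → ∃ x, IsUnit (a + x * b))
    (i : Fin (2 * d)) (hi : d ≤ (i : ℕ)) (v y : Fin (2 * d) → R)
    (hv : ∀ a, a < Fin.rev i → v a = 0) (hy : ∀ a, i < a → y a = 0)
    (hvy : ∑ a, v a * y a = 1) :
    ∃ S ∈ GSp d R, v ᵥ* (S : Matrix (Fin (2 * d)) (Fin (2 * d)) R) = Pi.single i 1 ∧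
      ∀ l, i < l → (Pi.single l 1 : Fin (2 * d) → R) ᵥ* (S : Matrix (Fin (2 * d)) (Fin (2 * d)) R)
        = Pi.single l 1 := by
  have hrev : Fin.rev i < i := by
    rw [Fin.lt_def, Fin.val_rev]; have := i.2; omega
  have hei : eps R i = -1 := by unfold eps; rw [if_neg (by omega)]
  obtain ⟨x, hx⟩ := hsr (v i) (∑ a ∈ Finset.univ.erase i, v a * y a) ⟨y i, 1, by
    rw [← Finset.add_sum_erase _ _ (Finset.mem_univ i)] at hvy
    linear_combination hvy⟩
  let w : Fin (2 * d) → R := fun b =>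
    if Fin.rev b = i then 1 else - (eps R (Fin.rev b) * (x * y (Fin.rev b)))
  have hw0 : ∀ a, a < Fin.rev i → w a = 0 := by
    intro a ha
    have : i < Fin.rev a := by rwa [← Fin.rev_lt_rev, Fin.rev_rev]
    simp [w, this.ne', hy _ this]
  have hwi : w (Fin.rev i) = 1 := by simp [w]
  have hBvw : B v w = -(v i + x * ∑ a ∈ Finset.univ.erase i, v a * y a) := by
    rw [B_eq, ← Finset.add_sum_erase _ _ (Finset.mem_univ i), hwi, hei, Finset.mul_sum, neg_add,
      ← Finset.sum_neg_distrib]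
    congr 1
    · ring
    · refine Finset.sum_congr rfl fun a ha => ?_
      have hne := Finset.ne_of_mem_erase ha
      simp only [w, Fin.rev_rev, if_neg hne]
      linear_combination (-(v a * x * y a)) * eps_sq (R := R) a
  have hu : IsUnit (B v w) := by rw [hBvw]; exact hx.neg
  obtain ⟨ε, hε⟩ := hu
  have hBwe : B w (Pi.single i 1) = 1 := by
    rw [B_single_right, hwi, eps_rev, hei]; ring
  have sub_eq : ∀ p q : Fin (2 * d) → R, p - q = p + (-1 : R) • q := fun p q => by
    rw [neg_one_smul, sub_eq_add_neg]
  obtain ⟨S₁, hS₁, h1⟩ := transvection (w - v) ((ε⁻¹ : Rˣ) : R)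
  obtain ⟨S₂, hS₂, h2⟩ := transvection (Pi.single i 1 - w) (1 : R)
  have hfix : ∀ (u : Fin (2 * d) → R) (l : Fin (2 * d)), i < l → (∀ a, a < Fin.rev i → u a = 0) →
      B (Pi.single l 1) u = 0 := by
    intro u l hl hu
    rw [B_single_left, hu _ (by rwa [Fin.rev_lt_rev]), mul_zero]
  refine ⟨S₁ * S₂, mul_mem hS₁ hS₂, ?_, fun l hl => ?_⟩
  · rw [Units.val_mul, ← vecMul_vecMul, h1]
    have e1 : v + (((ε⁻¹ : Rˣ) : R) * B v (w - v)) • (w - v) = w := by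
      rw [sub_eq w v, B_add_right, B_smul_right, B_self, ← hε]
      simp
    rw [e1, h2, sub_eq _ w, B_add_right, B_smul_right, B_self, hBwe]
    simp
  · rw [Units.val_mul, ← vecMul_vecMul, h1, hfix _ l hl (fun a ha => by simp [hw0 a ha, hv a ha]),
      mul_zero, zero_smul, add_zero, h2, hfix _ l hl (fun a ha => by
        simp [hw0 a ha, Pi.single_apply, (ha.trans hrev).ne]),
      mul_zero, zero_smul, add_zero]

end Symp

lemma glMap_coe {m : ℕ} {R S : Type*} [CommRing R] [CommRing S] (f : R →+* S) (g : GL (Fin m) R) :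
    ((glMap f g : GL (Fin m) S) : Matrix (Fin m) (Fin m) S) =
      (g : Matrix (Fin m) (Fin m) R).map f := rfl

lemma Jsymp_map {d : ℕ} {R S : Type*} [CommRing R] [CommRing S] (f : R →+* S) :
    (Jsymp d R).map f = Jsymp d S := by
  ext a b
  simp only [Matrix.map_apply, Jsymp, Matrix.of_apply]
  split_ifs <;> simp

lemma glMap_mem {d : ℕ} {R S : Type*} [CommRing R] [CommRing S] (f : R →+* S)
    {g : GL (Fin (2 * d)) R} (hg : g ∈ GSp d R) : glMap f g ∈ GSp d S := by
  obtain ⟨c, hc⟩ := (mem_GSp g).1 hg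
  refine (mem_GSp _).2 ⟨Units.map f.toMonoidHom c, ?_⟩
  have h := congrArg (fun M : Matrix (Fin (2 * d)) (Fin (2 * d)) R => M.map f) hc
  simp only [Matrix.map_mul, Jsymp_map] at h
  rw [glMap_coe, ← Matrix.transpose_map, h]
  ext a b
  simp [← Jsymp_map f]

lemma GSp_col {d : ℕ} {R : Type*} [CommRing R] (H : Matrix (Fin (2 * d)) (Fin (2 * d)) R) (c : R)
    (hc : ∀ a b, B (H a) (H b) = c * Jsymp d R a b) (b : Fin (2 * d)) (hb : H b = Pi.single b 1)
    (a : Fin (2 * d)) : H a (Fin.rev b) = if a = Fin.rev b then c else 0 := by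
  have h := hc a b
  rw [hb, B_single_right, Jsymp_apply'] at h
  have h' := congrArg (· * eps R (Fin.rev b)) h
  simp only [mul_assoc, eps_sq, mul_one] at h'
  rw [h']
  by_cases hab : a = Fin.rev b
  · subst hab; simp [eps_sq]
  · rw [if_neg hab, if_neg (fun e => hab (by rw [e, Fin.rev_rev]))]; simp

lemma PrSet_mul {d r : ℕ} {R : Type*} [CommRing R] {p q : GL (Fin (2 * d)) R}
    (hp : p ∈ PrSet d r R) (hq : q ∈ PrSet d r R) : p * q ∈ PrSet d r R := by
  refine ⟨mul_mem hp.1 hq.1, ?_⟩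
  have h1 : Matrix.BlockTriangular (p : Matrix (Fin (2 * d)) (Fin (2 * d)) R)
    (fun i : Fin (2 * d) => blk d r i) := fun i j h => hp.2 i j h
  have h2 : Matrix.BlockTriangular (q : Matrix (Fin (2 * d)) (Fin (2 * d)) R)
    (fun i : Fin (2 * d) => blk d r i) := fun i j h => hq.2 i j h
  intro i j h
  rw [Units.val_mul]
  exact (h1.mul h2) h

lemma PrSet_inv {d r : ℕ} {R : Type*} [CommRing R] {p : GL (Fin (2 * d)) R}
    (hp : p ∈ PrSet d r R) : p⁻¹ ∈ PrSet d r R := by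
  refine ⟨inv_mem hp.1, ?_⟩
  have h1 : Matrix.BlockTriangular (p : Matrix (Fin (2 * d)) (Fin (2 * d)) R)
    (fun i : Fin (2 * d) => blk d r i) := fun i j h => hp.2 i j h
  letI : Invertible (p : Matrix (Fin (2 * d)) (Fin (2 * d)) R) := p.invertible
  have h2 := Matrix.blockTriangular_inv_of_blockTriangular h1
  intro i j h
  rw [Matrix.coe_units_inv]
  exact h2 h

lemma PrSet_of_upper {d r : ℕ} {R : Type*} [CommRing R] {p : GL (Fin (2 * d)) R}
    (hp : p ∈ GSp d R)
    (h : ∀ a b, b < a → (p : Matrix (Fin (2 * d)) (Fin (2 * d)) R) a b = 0) : p ∈ PrSet d r R := by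
  refine ⟨hp, fun i j hij => h i j ?_⟩
  by_contra hle
  have hle' : (i : ℕ) ≤ j := not_lt.1 hle
  unfold blk at hij
  split_ifs at hij <;> omega

lemma core {d r : ℕ} {A : Type} [CommRing A] (ratA : ℚ →+* A) (zA : ↥ZHat →+* A)
    (zA_inj : Function.Injective zA)
    (A_spl : ∀ x : A, ∃ (q : ℚ) (z : ↥ZHat), x = ratA q + zA z)
    (A_prim : ∀ v : Fin (2 * d) → A, (∃ y : Fin (2 * d) → A, ∑ a, v a * y a = 1) →
      ∃ t : ℚ, t ≠ 0 ∧ ∃ w : Fin (2 * d) → ↥ZHat, (∀ a, v a = ratA t * zA (w a)) ∧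
        ∃ y : Fin (2 * d) → ↥ZHat, ∑ a, w a * y a = 1)
    (h : GL (Fin (2 * d)) A) (hh : h ∈ GSp d A) (i : Fin (2 * d))
    (hi : d ≤ (i : ℕ))
    (hrow : ∀ a, i < a → (h : Matrix (Fin (2 * d)) (Fin (2 * d)) A) a = Pi.single a 1) :
    ∃ p ∈ PrSet d r ℚ, ∃ k ∈ GSp d ↥ZHat, ∀ a, i ≤ a →
      ((glMap ratA p * h * glMap zA k : GL (Fin (2 * d)) A) :
        Matrix (Fin (2 * d)) (Fin (2 * d)) A) a = Pi.single a 1 := by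
  have hrev : Fin.rev i < i := by
    rw [Fin.lt_def, Fin.val_rev]; have := i.2; omega
  have heps : ∀ (R : Type) [CommRing R], eps R i = -1 := by
    intro R _; unfold eps; rw [if_neg (by omega)]
  obtain ⟨c, -, hc⟩ := GSp_rows hh
  obtain ⟨H, hH⟩ : ∃ H : Matrix (Fin (2 * d)) (Fin (2 * d)) A, H = h := ⟨_, rfl⟩
  simp only [← hH] at hrow hc
  have hcol : ∀ a b, b < Fin.rev i → H a b = if a = b then (c : A) else 0 := by
    intro a b hb
    have := GSp_col H c hc (Fin.rev b) (hrow _ (by rwa [← Fin.rev_lt_rev, Fin.rev_rev])) a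
    rwa [Fin.rev_rev] at this
  -- primitive vector
  obtain ⟨t, ht, w, hw, y, hy⟩ := A_prim (fun a => if i < a then 0 else H i a)
    ⟨fun a => - ((c⁻¹ : Aˣ) : A) * (eps A a * H (Fin.rev i) (Fin.rev a)), by
      have h1 := hc i (Fin.rev i)
      rw [B_eq, Jsymp_apply', if_pos rfl, heps] at h1
      have h2 : ∀ a, (if i < a then 0 else H i a) *
          (- ((c⁻¹ : Aˣ) : A) * (eps A a * H (Fin.rev i) (Fin.rev a))) =
          - ((c⁻¹ : Aˣ) : A) * (H i a * (eps A a * H (Fin.rev i) (Fin.rev a))) := by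
        intro a
        split_ifs with ha
        · rw [hcol (Fin.rev i) (Fin.rev a) (by rwa [Fin.rev_lt_rev]),
            if_neg (fun e => ha.ne (Fin.rev_injective e))]
          simp
        · ring
      simp only [h2]
      rw [← Finset.mul_sum, h1]
      linear_combination Units.inv_mul c⟩
  have htt : ratA t⁻¹ * ratA t = 1 := by rw [← map_mul, inv_mul_cancel₀ ht, map_one]
  have hwz : ∀ a, ratA t⁻¹ * (if i < a then 0 else H i a) = zA (w a) := by
    intro a; rw [hw a, ← mul_assoc, htt, one_mul]
  have hw1 : ∀ a, i < a → w a = 0 := by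
    intro a ha
    apply zA_inj
    rw [← hwz, if_pos ha, mul_zero, map_zero]
  have hw2 : ∀ a, a < Fin.rev i → w a = 0 := by
    intro a ha
    apply zA_inj
    rw [← hwz, if_neg (ha.trans hrev).le.not_gt, hcol i a ha, if_neg (ha.trans hrev).ne', mul_zero,
      map_zero]
  choose x z hxz using fun a => A_spl (ratA t⁻¹ * H i a)
  let v' : Fin (2 * d) → ↥ZHat := fun a => if i < a then z a else w a
  let y' : Fin (2 * d) → ↥ZHat := fun a => if i < a then 0 else y a
  let x' : Fin (2 * d) → ℚ := fun a => if i < a then x a else 0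
  have hx' : ∀ a, a ≤ i → x' a = 0 := fun a ha => if_neg ha.not_gt
  have hvy : ∑ a, v' a * y' a = 1 := by
    rw [← hy]
    refine Finset.sum_congr rfl fun a _ => ?_
    simp only [v', y']
    split_ifs with ha
    · rw [hw1 a ha]; simp
    · rfl
  obtain ⟨S, hS, hS1, hS2⟩ := transitive zhat_sr i hi v' y'
    (fun a ha => by simp only [v']; rw [if_neg (ha.trans hrev).le.not_gt, hw2 a ha])
    (fun a ha => if_pos ha) hvy
  -- the rational matrices
  let s : Fin (2 * d) → ℚ := fun a => if a = i then t⁻¹ else if a = Fin.rev i then t else 1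
  obtain ⟨D, hD, hDs⟩ := diagSp s (by
    intro a
    simp only [s]
    by_cases h1 : a = i
    · subst h1; rw [if_pos rfl, if_neg hrev.ne, if_pos rfl, inv_mul_cancel₀ ht]
    · by_cases h2 : a = Fin.rev i
      · subst h2; rw [if_neg h1, if_pos rfl, Fin.rev_rev, if_pos rfl, mul_inv_cancel₀ ht]
      · rw [if_neg h1, if_neg h2, if_neg (fun e => h2 (by rw [← e, Fin.rev_rev])),
          if_neg (fun e => h1 (Fin.rev_injective e)), one_mul])
  obtain ⟨E, hE, hEr⟩ := eichler (Pi.single (Fin.rev i) 1) x' (by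
    rw [B_single_left, Fin.rev_rev, hx' i le_rfl, mul_zero])
  have hDP : D ∈ PrSet d r ℚ := PrSet_of_upper hD fun a b hab => by
    rw [hDs, Matrix.diagonal_apply_ne _ hab.ne']
  have hEP : E ∈ PrSet d r ℚ := PrSet_of_upper hE fun a b hab => by
    rw [hEr, B_single_left, B_single_left]
    simp only [Pi.add_apply, Pi.smul_apply, smul_eq_mul, Pi.single_apply]
    rw [if_neg hab.ne]
    by_cases h1 : a = i
    · subst h1
      rw [hx' b hab.le, hx' _ hrev.le]; simp
    · rw [if_neg (fun e => h1 (Fin.rev_injective e))]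
      by_cases h2 : b = Fin.rev i
      · rw [hx' (Fin.rev a) (by
          rw [h2] at hab
          rw [← Fin.rev_le_rev, Fin.rev_rev]; exact hab.le)]
        simp
      · rw [if_neg h2]; simp
  have hEi : (E : Matrix (Fin (2 * d)) (Fin (2 * d)) ℚ) i = Pi.single i 1 - x' := by
    rw [hEr, B_single_left, B_single_left, hx' _ hrev.le, heps]
    simp [sub_eq_add_neg]
  have hEa : ∀ a, i < a → (E : Matrix (Fin (2 * d)) (Fin (2 * d)) ℚ) a = Pi.single a 1 := by
    intro a ha
    rw [hEr, B_single_left, B_single_left, hx' (Fin.rev a) (by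
      rw [← Fin.rev_lt_rev] at ha; exact (ha.trans hrev).le), Pi.single_apply,
      if_neg (fun e => ha.ne' (Fin.rev_injective e))]
    simp
  refine ⟨E * D, PrSet_mul hEP hDP, S, hS, ?_⟩
  have hent : ∀ a b, ((glMap ratA (E * D) * h : GL (Fin (2 * d)) A) :
        Matrix (Fin (2 * d)) (Fin (2 * d)) A) a b =
      ∑ l, ratA ((E : Matrix (Fin (2 * d)) (Fin (2 * d)) ℚ) a l) * ratA (s l) * H l b := by
    intro a b
    rw [Units.val_mul, glMap_coe, Units.val_mul, hDs, ← hH, Matrix.mul_apply]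
    refine Finset.sum_congr rfl fun l _ => ?_
    rw [Matrix.map_apply, Matrix.mul_diagonal, map_mul]
  have hPa : ∀ a, i < a → ((glMap ratA (E * D) * h : GL (Fin (2 * d)) A) :
        Matrix (Fin (2 * d)) (Fin (2 * d)) A) a = Pi.single a 1 := by
    intro a ha
    ext b
    rw [hent, hEa a ha, Finset.sum_eq_single a]
    · have : s a = 1 := by simp only [s]; rw [if_neg ha.ne', if_neg (hrev.trans ha).ne']
      rw [this, hrow a ha]; simp
    · intro l _ hl; simp [hl]
    · intro hl; exact absurd (Finset.mem_univ _) hl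
  have hPi : ((glMap ratA (E * D) * h : GL (Fin (2 * d)) A) :
        Matrix (Fin (2 * d)) (Fin (2 * d)) A) i = zA ∘ v' := by
    ext b
    rw [hent, hEi]
    have e1 : ∀ l, ratA ((Pi.single i 1 - x' : Fin (2 * d) → ℚ) l) * ratA (s l) * H l b =
        (if l = i then ratA t⁻¹ * H i b else 0) - (if l = b then ratA (x' b) else 0) := by
      intro l
      rw [Pi.sub_apply, Pi.single_apply]
      by_cases hl : l = i
      · subst hl
        rw [if_pos rfl, if_pos rfl, hx' l le_rfl]
        have : s l = t⁻¹ := if_pos rfl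
        rw [this]
        split_ifs with hb
        · subst hb; rw [hx' l le_rfl]; simp
        · simp
      · rw [if_neg hl, if_neg hl]
        by_cases hil : i < l
        · have : s l = 1 := by simp only [s]; rw [if_neg hl, if_neg (hrev.trans hil).ne']
          rw [this, hrow l hil, Pi.single_apply]
          by_cases hb : l = b
          · subst hb; simp
          · rw [if_neg hb, if_neg (Ne.symm hb)]; simp
        · rw [hx' l (not_lt.1 hil)]
          split_ifs with hb
          · subst hb; rw [hx' l (not_lt.1 hil)]; simp
          · simp
    simp only [e1, Finset.sum_sub_distrib, Finset.sum_ite_eq', Finset.mem_univ, if_true,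
      Function.comp_apply, v', x']
    split_ifs with hb
    · rw [hxz]; ring
    · rw [← hwz, if_neg hb, map_zero, sub_zero]
  intro a ha
  have hmul : ((glMap ratA (E * D) * h * glMap zA S : GL (Fin (2 * d)) A) :
        Matrix (Fin (2 * d)) (Fin (2 * d)) A) a =
      ((glMap ratA (E * D) * h : GL (Fin (2 * d)) A) :
        Matrix (Fin (2 * d)) (Fin (2 * d)) A) a ᵥ*
        (S : Matrix (Fin (2 * d)) (Fin (2 * d)) ↥ZHat).map zA := by
    rw [Units.val_mul (_ * h), glMap_coe]
    exact Matrix.mul_apply_eq_vecMul _ _ _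
  have hsing : ∀ l : Fin (2 * d), zA ∘ (Pi.single l 1 : Fin (2 * d) → ↥ZHat) = Pi.single l 1 := by
    intro l; ext b
    simp only [Function.comp_apply, Pi.single_apply]
    split_ifs <;> simp
  have hvm : ∀ u : Fin (2 * d) → ↥ZHat, (zA ∘ u) ᵥ*
      (S : Matrix (Fin (2 * d)) (Fin (2 * d)) ↥ZHat).map zA =
      zA ∘ (u ᵥ* (S : Matrix (Fin (2 * d)) (Fin (2 * d)) ↥ZHat)) := by
    intro u; ext b
    exact (RingHom.map_vecMul zA _ u b).symm
  rw [hmul]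
  rcases ha.eq_or_lt with rfl | ha
  · rw [hPi, hvm, hS1, hsing]
  · rw [hPa a ha, ← hsing, hvm, hS2 a ha]

lemma iterate {d r : ℕ} {A : Type} [CommRing A] (ratA : ℚ →+* A) (zA : ↥ZHat →+* A)
    (zA_inj : Function.Injective zA)
    (A_spl : ∀ x : A, ∃ (q : ℚ) (z : ↥ZHat), x = ratA q + zA z)
    (A_prim : ∀ v : Fin (2 * d) → A, (∃ y : Fin (2 * d) → A, ∑ a, v a * y a = 1) →
      ∃ t : ℚ, t ≠ 0 ∧ ∃ w : Fin (2 * d) → ↥ZHat, (∀ a, v a = ratA t * zA (w a)) ∧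
        ∃ y : Fin (2 * d) → ↥ZHat, ∑ a, w a * y a = 1)
    (g : GL (Fin (2 * d)) A) (hg : g ∈ GSp d A) (j : ℕ) : j ≤ d →
    ∃ p ∈ PrSet d r ℚ, ∃ k ∈ GSp d ↥ZHat, ∀ a : Fin (2 * d), 2 * d ≤ (a : ℕ) + j →
      ((glMap ratA p * g * glMap zA k : GL (Fin (2 * d)) A) :
        Matrix (Fin (2 * d)) (Fin (2 * d)) A) a = Pi.single a 1 := by
  induction j with
  | zero =>
    intro _
    refine ⟨1, PrSet_of_upper (one_mem _) fun a b hab => ?_, 1, one_mem _, fun a ha => ?_⟩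
    · rw [Units.val_one, Matrix.one_apply_ne hab.ne']
    · have := a.2; omega
  | succ j ih =>
    intro hj
    obtain ⟨p, hp, k, hk, h1⟩ := ih (by omega)
    obtain ⟨p', hp', k', hk', h2⟩ := core (r := r) ratA zA zA_inj A_spl A_prim (glMap ratA p * g * glMap zA k)
      (mul_mem (mul_mem (glMap_mem _ hp.1) hg) (glMap_mem _ hk)) ⟨2 * d - 1 - j, by omega⟩
      (by change d ≤ 2 * d - 1 - j; omega)
      (fun a ha => h1 a (by
        have : 2 * d - 1 - j < (a : ℕ) := ha
        omega))
    refine ⟨p' * p, PrSet_mul hp' hp, k * k', mul_mem hk hk', fun a ha => ?_⟩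
    have h3 := h2 a (by
      change 2 * d - 1 - j ≤ (a : ℕ)
      omega)
    rw [← h3, map_mul, map_mul]
    simp only [mul_assoc]

lemma final {d r : ℕ} {A : Type} [CommRing A] (ratA : ℚ →+* A) (zA : ↥ZHat →+* A)
    (zA_inj : Function.Injective zA)
    (A_spl : ∀ x : A, ∃ (q : ℚ) (z : ↥ZHat), x = ratA q + zA z)
    (A_prim : ∀ v : Fin (2 * d) → A, (∃ y : Fin (2 * d) → A, ∑ a, v a * y a = 1) →
      ∃ t : ℚ, t ≠ 0 ∧ ∃ w : Fin (2 * d) → ↥ZHat, (∀ a, v a = ratA t * zA (w a)) ∧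
        ∃ y : Fin (2 * d) → ↥ZHat, ∑ a, w a * y a = 1)
    (hd : 1 ≤ d) (hr : r ≤ d - 1) (g : GL (Fin (2 * d)) A) (hg : g ∈ GSp d A) :
    ∃ p ∈ PrSet d r ℚ, ∃ q ∈ QrSet d r A, ∃ k ∈ GSp d ↥ZHat,
      g = glMap ratA p * q * glMap zA k := by
  obtain ⟨p, hp, k, hk, hrow⟩ := iterate (r := r) ratA zA
    zA_inj A_spl A_prim g hg (d - r) (by omega)
  have hq := mul_mem (mul_mem (glMap_mem ratA hp.1) hg) (glMap_mem zA hk)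
  obtain ⟨c, hcJ, hc⟩ := GSp_rows hq
  have hcol : ∀ a b : Fin (2 * d), blk d r b = 0 →
      ((glMap ratA p * g * glMap zA k : GL (Fin (2 * d)) A) :
        Matrix (Fin (2 * d)) (Fin (2 * d)) A) a b = if a = b then (c : A) else 0 := by
    intro a b hb
    have hb' : (b : ℕ) < d - r := by
      unfold blk at hb
      split_ifs at hb with h1
      exact h1
    have := GSp_col _ (c : A) hc (Fin.rev b) (hrow _ (by rw [Fin.val_rev]; omega)) a
    rwa [Fin.rev_rev] at this
  have hlast : ∀ a : Fin (2 * d), blk d r a = 2 → 2 * d ≤ (a : ℕ) + (d - r) := by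
    intro a ha
    unfold blk at ha
    split_ifs at ha <;> omega
  refine ⟨p⁻¹, PrSet_inv hp, glMap ratA p * g * glMap zA k,
    ⟨c, hcJ, ?_, ?_, ?_⟩, k⁻¹, inv_mem hk, ?_⟩
  · intro i j hij
    by_cases hi : blk d r i = 2
    · rw [hrow i (hlast i hi), Pi.single_apply, if_neg]
      rintro rfl
      exact lt_irrefl _ hij
    · have hj : blk d r j = 0 := by
        have : blk d r i ≤ 2 := by unfold blk; split_ifs <;> omega
        omega
      rw [hcol i j hj, if_neg]
      rintro rfl
      exact lt_irrefl _ hij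
  · intro i j _ hj
    exact hcol i j hj
  · intro i j hi _
    rw [hrow i (hlast i hi), Pi.single_apply]
    simp only [eq_comm]
  · rw [map_inv, map_inv]
    group

end GSpProof

/-- Lemma 1.2.1: `GSp_{2d}(𝔸_f) = P_r(ℚ) · Q_r(𝔸_f) · GSp_{2d}(Ẑ)`. -/
theorem GSp_eq_Pr_Qr_GSpZhat (d r : ℕ) (hd : 1 ≤ d) (hr : r ≤ d - 1) :
    ∀ g ∈ GSp d AQf, ∃ p ∈ PrQinA d r, ∃ q ∈ QrSet d r AQf, ∃ k ∈ GSpZinA d,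
      g = p * q * k := by
  intro g hg
  obtain ⟨p, hp, q, hq, k, hk, h⟩ := GSpProof.final ratToA zhatToA
    GSpProof.zhatToA_inj GSpProof.A_split GSpProof.A_primitive hd hr g hg
  exact ⟨_, ⟨p, hp, rfl⟩, q, hq, _, ⟨k, hk, rfl⟩, h⟩
end
end

section
/- Fix d ≥ 1 and 0 ≤ r ≤ d−1. Then P_r(ℚ)Q_r(𝔸_f) ∩ GSp_{2d}(Ẑ) = P_r(ℤ)·Q_r(Ẑ), where P_r(ℤ) = P_r(ℚ) ∩ GL_{2d}(ℤ) and Q_r(Ẑ) = Q_r(𝔸_f) ∩ GSp_{2d}(Ẑ): an element k ∈ GSp_{2d}(Ẑ) lies in P_r(ℚ)Q_r(𝔸_f) if and only if k can be written k = p·q with p ∈ P_r(ℤ) and q ∈ Q_r(Ẑ). -/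
open Matrix
open scoped TensorProduct

noncomputable section

section helpers

lemma blk_le_two (d r i : ℕ) : blk d r i ≤ 2 := by
  unfold blk; split_ifs <;> omega

lemma blk_rev (d r : ℕ) (hr : r ≤ d) (i : Fin (2 * d)) :
    blk d r (i.rev : ℕ) = 2 - blk d r (i : ℕ) := by
  have := i.isLt
  unfold blk
  rw [Fin.val_rev]
  split_ifs <;> omega

/-- The sign attached to a row of `Jsymp`. -/
def sgnJ (d : ℕ) (R : Type*) [CommRing R] (i : Fin (2 * d)) : R := if (i : ℕ) < d then 1 else -1

lemma Jsymp_apply (d : ℕ) (R : Type*) [CommRing R] (i j : Fin (2 * d)) :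
    Jsymp d R i j = if j = i.rev then sgnJ d R i else 0 := by
  have h1 := i.isLt
  have h2 := j.isLt
  have : ((i : ℕ) + (j : ℕ) + 1 = 2 * d) ↔ j = i.rev := by
    rw [Fin.ext_iff, Fin.val_rev]; omega
  simp only [Jsymp, Matrix.of_apply, sgnJ, this]

lemma Jsymp_mul_apply (d : ℕ) {R : Type*} [CommRing R] (M : Matrix (Fin (2 * d)) (Fin (2 * d)) R)
    (i j : Fin (2 * d)) : (Jsymp d R * M) i j = sgnJ d R i * M i.rev j := by
  rw [Matrix.mul_apply, Finset.sum_eq_single i.rev]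
  · simp [Jsymp_apply]
  · intro b _ hb; simp [Jsymp_apply, hb]
  · simp

lemma mul_Jsymp_apply (d : ℕ) {R : Type*} [CommRing R] (M : Matrix (Fin (2 * d)) (Fin (2 * d)) R)
    (i j : Fin (2 * d)) : (M * Jsymp d R) i j = M i j.rev * sgnJ d R j.rev := by
  rw [Matrix.mul_apply, Finset.sum_eq_single j.rev]
  · simp [Jsymp_apply]
  · intro b _ hb
    have : j ≠ b.rev := by rintro rfl; simp at hb
    simp [Jsymp_apply, this]
  · simp

/-- The block diagonal matrix with blocks built from `g` and `h` (with `h` an inverse of `g`). -/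
def Dmat (d r : ℕ) {R : Type*} [CommRing R] (g h : Matrix (Fin (2 * d)) (Fin (2 * d)) R) :
    Matrix (Fin (2 * d)) (Fin (2 * d)) R :=
  Matrix.of fun i j =>
    if blk d r i = blk d r j then
      (if blk d r i = 2 then g i j else if blk d r i = 0 then h j.rev i.rev
        else if i = j then 1 else 0)
    else 0

lemma Dmat_off (d r : ℕ) {R : Type*} [CommRing R] (g h : Matrix (Fin (2 * d)) (Fin (2 * d)) R)
    (i j : Fin (2 * d)) (hij : blk d r i ≠ blk d r j) : Dmat d r g h i j = 0 := by
  simp [Dmat, hij]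

lemma Dmat_two (d r : ℕ) {R : Type*} [CommRing R] (g h : Matrix (Fin (2 * d)) (Fin (2 * d)) R)
    (i j : Fin (2 * d)) (hi : blk d r i = 2) (hj : blk d r j = 2) :
    Dmat d r g h i j = g i j := by
  simp [Dmat, hi, hj]

lemma Dmat_zero (d r : ℕ) {R : Type*} [CommRing R] (g h : Matrix (Fin (2 * d)) (Fin (2 * d)) R)
    (i j : Fin (2 * d)) (hi : blk d r i = 0) (hj : blk d r j = 0) :
    Dmat d r g h i j = h j.rev i.rev := by
  simp [Dmat, hi, hj]

lemma Dmat_one (d r : ℕ) {R : Type*} [CommRing R] (g h : Matrix (Fin (2 * d)) (Fin (2 * d)) R)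
    (i j : Fin (2 * d)) (hi : blk d r i = 1) :
    Dmat d r g h i j = if i = j then 1 else 0 := by
  by_cases hij : blk d r i = blk d r j
  · have hj : blk d r j = 1 := hij ▸ hi
    simp [Dmat, hi, hj]
  · have : i ≠ j := by rintro rfl; exact hij rfl
    simp [Dmat, hij, this]

/-- Block upper triangularity. -/
def BT (d r : ℕ) {R : Type*} [CommRing R] (g : Matrix (Fin (2 * d)) (Fin (2 * d)) R) : Prop :=
  ∀ i j : Fin (2 * d), blk d r (j : ℕ) < blk d r (i : ℕ) → g i j = 0

lemma BT.mul {d r : ℕ} {R : Type*} [CommRing R] {g h : Matrix (Fin (2 * d)) (Fin (2 * d)) R}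
    (hg : BT d r g) (hh : BT d r h) : BT d r (g * h) := by
  have := Matrix.BlockTriangular.mul (b := fun i : Fin (2 * d) => blk d r i) (M := g) (N := h)
    (fun i j hij => hg i j hij) (fun i j hij => hh i j hij)
  exact fun i j hij => this hij

lemma BT.inv {d r : ℕ} {R : Type*} [CommRing R] (g : GL (Fin (2 * d)) R)
    (hg : BT d r (g : Matrix (Fin (2 * d)) (Fin (2 * d)) R)) :
    BT d r ((g⁻¹ : GL (Fin (2 * d)) R) : Matrix (Fin (2 * d)) (Fin (2 * d)) R) := by
  have : Invertible (g : Matrix (Fin (2 * d)) (Fin (2 * d)) R) := g.invertible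
  have := Matrix.blockTriangular_inv_of_blockTriangular
    (b := fun i : Fin (2 * d) => blk d r i)
    (M := (g : Matrix (Fin (2 * d)) (Fin (2 * d)) R)) (fun i j hij => hg i j hij)
  intro i j hij
  rw [Matrix.coe_units_inv]
  exact this hij

lemma Dmat_BT (d r : ℕ) {R : Type*} [CommRing R] (g h : Matrix (Fin (2 * d)) (Fin (2 * d)) R) :
    BT d r (Dmat d r g h) := fun i j hij => Dmat_off d r g h i j hij.ne'

lemma Dmat_mul (d r : ℕ) (hr : r ≤ d) {R : Type*} [CommRing R]
    (g h : Matrix (Fin (2 * d)) (Fin (2 * d)) R) (hg : BT d r g)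
    (hgh : g * h = 1) : Dmat d r g h * Dmat d r h g = 1 := by
  ext i j
  rw [Matrix.mul_apply]
  by_cases hij : blk d r i = blk d r j
  · have h3 := blk_le_two d r i
    obtain h0 | h0 | h0 : blk d r i = 0 ∨ blk d r i = 1 ∨ blk d r i = 2 := by omega
    · have h0' : blk d r j = 0 := hij ▸ h0
      have e : ∀ l : Fin (2 * d), Dmat d r g h i l * Dmat d r h g l j
          = g j.rev l.rev * h l.rev i.rev := by
        intro l
        by_cases hl : blk d r l = 0
        · rw [Dmat_zero _ _ _ _ _ _ h0 hl, Dmat_zero _ _ _ _ _ _ hl h0', mul_comm]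
        · rw [Dmat_off _ _ _ _ _ _ (by omega : blk d r i ≠ blk d r l), hg j.rev l.rev]
          · simp
          · rw [blk_rev d r hr, blk_rev d r hr]
            have := blk_le_two d r l
            omega
      have e2 : ∑ l : Fin (2 * d), g j.rev l.rev * h l.rev i.rev = ∑ l, g j.rev l * h l i.rev :=
        Equiv.sum_comp Fin.revPerm (fun l => g j.rev l * h l i.rev)
      rw [Finset.sum_congr rfl (fun l _ => e l), e2, ← Matrix.mul_apply, hgh]
      simp [Matrix.one_apply, eq_comm]
    · rw [Finset.sum_eq_single i]
      · rw [Dmat_one _ _ _ _ _ _ h0, Dmat_one _ _ _ _ _ _ h0]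
        simp [Matrix.one_apply]
      · intro b _ hb
        rw [Dmat_one _ _ _ _ _ _ h0]; simp [Ne.symm hb]
      · simp
    · have h0' : blk d r j = 2 := hij ▸ h0
      have e : ∀ l : Fin (2 * d), Dmat d r g h i l * Dmat d r h g l j = g i l * h l j := by
        intro l
        by_cases hl : blk d r l = 2
        · rw [Dmat_two _ _ _ _ _ _ h0 hl, Dmat_two _ _ _ _ _ _ hl h0']
        · rw [Dmat_off _ _ _ _ _ _ (by omega : blk d r i ≠ blk d r l), hg i l]
          · simp
          · have := blk_le_two d r l
            omega
      rw [Finset.sum_congr rfl (fun l _ => e l), ← Matrix.mul_apply, hgh]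
  · have hne : i ≠ j := by rintro rfl; exact hij rfl
    rw [Matrix.one_apply_ne hne]
    apply Finset.sum_eq_zero
    intro l _
    by_cases hl : blk d r i = blk d r l
    · rw [Dmat_off d r h g l j (by rw [← hl]; exact hij), mul_zero]
    · rw [Dmat_off d r g h i l hl, zero_mul]

lemma Dmat_symp_aux (d r : ℕ) (hr : r ≤ d) {R : Type*} [CommRing R]
    (g h : Matrix (Fin (2 * d)) (Fin (2 * d)) R) :
    (Dmat d r g h)ᵀ * Jsymp d R = Jsymp d R * Dmat d r h g := by
  ext i j
  rw [mul_Jsymp_apply, Jsymp_mul_apply, Matrix.transpose_apply]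
  have hi := blk_rev d r hr i
  have hj := blk_rev d r hr j
  have hi2 := blk_le_two d r i
  have hj2 := blk_le_two d r j
  by_cases hij : blk d r j.rev = blk d r i
  · have hs : blk d r i ≠ 1 → sgnJ d R j.rev = sgnJ d R i := by
      intro h1
      have hji : ((j.rev : Fin (2 * d)) : ℕ) < d ↔ (i : ℕ) < d := by
        clear hi hj
        unfold blk at hij h1
        split_ifs at hij h1 <;> omega
      simp only [sgnJ, hji]
    obtain h0 | h0 | h0 : blk d r i = 0 ∨ blk d r i = 1 ∨ blk d r i = 2 := by omega
    · rw [Dmat_zero _ _ _ _ _ _ (by omega) h0, Dmat_two _ _ _ _ _ _ (by omega) (by omega),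
        hs (by omega), Fin.rev_rev, mul_comm]
    · rw [Dmat_one _ _ _ _ _ _ (by omega), Dmat_one _ _ _ _ _ _ (by omega)]
      by_cases e : j.rev = i
      · subst e; simp
      · have e' : i.rev ≠ j := by rintro rfl; simp at e
        simp [e, e']
    · rw [Dmat_two _ _ _ _ _ _ (by omega) h0, Dmat_zero _ _ _ _ _ _ (by omega) (by omega),
        hs (by omega), Fin.rev_rev, mul_comm]
  · rw [Dmat_off _ _ _ _ _ _ hij, Dmat_off _ _ _ _ _ _ (by omega)]; simp

lemma Dmat_symp (d r : ℕ) (hr : r ≤ d) {R : Type*} [CommRing R]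
    (g h : Matrix (Fin (2 * d)) (Fin (2 * d)) R) (H : Dmat d r h g * Dmat d r g h = 1) :
    (Dmat d r g h)ᵀ * Jsymp d R * Dmat d r g h = Jsymp d R := by
  rw [Dmat_symp_aux d r hr, Matrix.mul_assoc, H, Matrix.mul_one]

lemma Dmat_map (d r : ℕ) {R S : Type*} [CommRing R] [CommRing S] (f : R →+* S)
    (g h : Matrix (Fin (2 * d)) (Fin (2 * d)) R) (g' h' : Matrix (Fin (2 * d)) (Fin (2 * d)) S)
    (hr : r ≤ d)
    (hg : ∀ i j : Fin (2 * d), blk d r i = 2 → blk d r j = 2 → f (g i j) = g' i j)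
    (hh : ∀ i j : Fin (2 * d), blk d r i = 2 → blk d r j = 2 → f (h i j) = h' i j) :
    (Dmat d r g h).map f = Dmat d r g' h' := by
  ext i j
  rw [Matrix.map_apply]
  by_cases hij : blk d r i = blk d r j
  · have h3 := blk_le_two d r i
    have hi := blk_rev d r hr i
    have hj := blk_rev d r hr j
    obtain h0 | h0 | h0 : blk d r i = 0 ∨ blk d r i = 1 ∨ blk d r i = 2 := by omega
    · rw [Dmat_zero _ _ _ _ _ _ h0 (by omega), Dmat_zero _ _ _ _ _ _ h0 (by omega),
        hh _ _ (by omega) (by omega)]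
    · rw [Dmat_one _ _ _ _ _ _ h0, Dmat_one _ _ _ _ _ _ h0]
      split_ifs <;> simp
    · rw [Dmat_two _ _ _ _ _ _ h0 (by omega), Dmat_two _ _ _ _ _ _ h0 (by omega),
        hg _ _ (by omega) (by omega)]
  · rw [Dmat_off _ _ _ _ _ _ hij, Dmat_off _ _ _ _ _ _ hij, map_zero]

/-- The last diagonal block is multiplicative on block triangular matrices. -/
lemma block_two_mul_one (d r : ℕ) {R : Type*} [CommRing R]
    (g q : Matrix (Fin (2 * d)) (Fin (2 * d)) R) (hg : BT d r g)
    (hq : ∀ i j : Fin (2 * d), blk d r (i : ℕ) = 2 → blk d r (j : ℕ) = 2 →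
      q i j = if i = j then 1 else 0) (i j : Fin (2 * d)) (hi : blk d r i = 2)
    (hj : blk d r j = 2) : (g * q) i j = g i j := by
  rw [Matrix.mul_apply, Finset.sum_eq_single j]
  · rw [hq j j hj hj]; simp
  · intro b _ hb
    by_cases h : blk d r b = 2
    · rw [hq b j h hj]; simp [hb]
    · have := blk_le_two d r b
      rw [hg i b (by omega), zero_mul]
  · simp

lemma block_two_one_mul (d r : ℕ) {R : Type*} [CommRing R]
    (q g : Matrix (Fin (2 * d)) (Fin (2 * d)) R) (hbt : BT d r q)
    (hq : ∀ i j : Fin (2 * d), blk d r (i : ℕ) = 2 → blk d r (j : ℕ) = 2 →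
      q i j = if i = j then 1 else 0) (i j : Fin (2 * d)) (hi : blk d r i = 2) :
    (q * g) i j = g i j := by
  rw [Matrix.mul_apply, Finset.sum_eq_single i]
  · rw [hq i i hi hi]; simp
  · intro b _ hb
    by_cases h : blk d r b = 2
    · rw [hq i b hi h]; simp [Ne.symm hb]
    · have := blk_le_two d r b
      rw [hbt i b (by omega), zero_mul]
  · simp

lemma block_zero_of_two (d r : ℕ) (hr : r ≤ d) {R : Type*} [CommRing R] (c : R)
    (M : Matrix (Fin (2 * d)) (Fin (2 * d)) R) (hM : BT d r M)
    (hs : Mᵀ * Jsymp d R * M = c • Jsymp d R)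
    (h2 : ∀ i j : Fin (2 * d), blk d r (i : ℕ) = 2 → blk d r (j : ℕ) = 2 →
      M i j = if i = j then 1 else 0) (i j : Fin (2 * d)) (hi : blk d r i = 0)
    (hj : blk d r j = 0) : M i j = if i = j then c else 0 := by
  have hlt : ∀ l : Fin (2 * d), blk d r l = 0 → sgnJ d R l = 1 := by
    intro l hl
    have : (l : ℕ) < d := by
      unfold blk at hl
      split_ifs at hl; omega
    simp [sgnJ, this]
  have h := congrFun (congrFun hs j) i.rev
  have ri := blk_rev d r hr i
  rw [Matrix.mul_assoc, Matrix.mul_apply, Finset.sum_eq_single i, Matrix.smul_apply, Jsymp_apply,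
    Jsymp_mul_apply, hlt i hi, h2 _ _ (by omega) (by omega), hlt j hj, Matrix.transpose_apply] at h
  · simpa using h
  · intro b _ hb
    rw [Jsymp_mul_apply, Matrix.transpose_apply]
    by_cases hb0 : blk d r b = 0
    · have rb := blk_rev d r hr b
      rw [h2 b.rev i.rev (by omega) (by omega), if_neg (by simpa using hb)]; simp
    · rw [hM b j (by omega), zero_mul]
  · simp

lemma Jsymp_map (d : ℕ) {R S : Type*} [CommRing R] [CommRing S] (f : R →+* S) :
    (Jsymp d R).map f = Jsymp d S := by
  ext i j
  simp only [Matrix.map_apply, Jsymp_apply, sgnJ]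
  split_ifs <;> simp

lemma glMap_coe {m : ℕ} {R S : Type*} [CommRing R] [CommRing S] (f : R →+* S)
    (g : GL (Fin m) R) : ((glMap f g : GL (Fin m) S) : Matrix (Fin m) (Fin m) S)
      = (g : Matrix (Fin m) (Fin m) R).map f := rfl

lemma glMap_comp {m : ℕ} {R S T : Type*} [CommRing R] [CommRing S] [CommRing T] (f : R →+* S)
    (f' : S →+* T) (g : GL (Fin m) R) : glMap f' (glMap f g) = glMap (f'.comp f) g := by
  apply Units.ext
  rfl

lemma mem_GSp_iff {d : ℕ} {R : Type*} [CommRing R] (g : GL (Fin (2 * d)) R) :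
    g ∈ GSp d R ↔ ∃ c : Rˣ, (g : Matrix (Fin (2 * d)) (Fin (2 * d)) R)ᵀ * Jsymp d R *
      (g : Matrix (Fin (2 * d)) (Fin (2 * d)) R) = (c : R) • Jsymp d R := by
  constructor
  · rintro ⟨⟨a, c⟩, h, rfl⟩
    exact ⟨c, h⟩
  · rintro ⟨c, h⟩
    exact ⟨(g, c), h, rfl⟩

lemma GSp_map {d : ℕ} {R S : Type*} [CommRing R] [CommRing S] (f : R →+* S)
    (g : GL (Fin (2 * d)) R) (hg : g ∈ GSp d R) : glMap f g ∈ GSp d S := by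
  rw [mem_GSp_iff] at hg ⊢
  obtain ⟨c, hc⟩ := hg
  refine ⟨Units.map f.toMonoidHom c, ?_⟩
  have := congrArg (fun M => M.map f) hc
  simp only [Matrix.map_mul, Jsymp_map, Matrix.transpose_map] at this
  rw [glMap_coe, this]
  ext i j
  simp only [Matrix.map_apply, Matrix.smul_apply, smul_eq_mul, map_mul, ← Jsymp_map d f]
  rfl

lemma ZHat_torsion (n : ℕ+) (z : ↥ZHat) (h : ((n : ℕ) : ↥ZHat) * z = 0) : z = 0 := by
  apply Subtype.ext
  funext m
  have hc := z.2 m (n * m) (by simp)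
  have h1 : ((n : ℕ) : ZMod ((n * m : ℕ+) : ℕ)) * z.1 (n * m) = 0 :=
    congrFun (congrArg Subtype.val h) (n * m)
  rw [← hc]
  have : NeZero ((n * m : ℕ+) : ℕ) := ⟨(n * m).pos.ne'⟩
  generalize z.1 (n * m) = w at *
  obtain ⟨a, rfl⟩ := ZMod.natCast_zmod_surjective w
  rw [← Nat.cast_mul, ZMod.natCast_eq_zero_iff, PNat.mul_coe,
    Nat.mul_dvd_mul_iff_left n.pos] at h1
  rw [map_natCast]
  exact (ZMod.natCast_eq_zero_iff _ _).2 h1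

instance : Module.IsTorsionFree ℤ ↥ZHat := by
  apply Module.IsTorsionFree.of_smul_eq_zero
  intro n z h
  by_cases hn : n = 0
  · exact Or.inl hn
  right
  apply ZHat_torsion ⟨n.natAbs, Int.natAbs_pos.2 hn⟩
  rw [zsmul_eq_mul] at h
  change ((n.natAbs : ℕ) : ↥ZHat) * z = 0
  rcases Int.natAbs_eq n with e | e
  · rw [e] at h
    rwa [Int.cast_natCast] at h
  · rw [e, Int.cast_neg, neg_mul, neg_eq_zero] at h
    rwa [Int.cast_natCast] at h

lemma zhatToA_injective : Function.Injective zhatToA := by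
  have : Function.Injective (algebraMap ℤ ℚ) := Int.cast_injective
  exact Algebra.TensorProduct.includeLeft_injective (S := ℤ) (A := ↥ZHat) this

lemma rat_integral (x : ℚ) (z : ↥ZHat) (h : ratToA x = zhatToA z) : ∃ a : ℤ, (a : ℚ) = x := by
  have h1 : zhatToA ((x.num : ℤ) : ↥ZHat) = zhatToA ((x.den : ↥ZHat) * z) := by
    rw [map_mul, ← h, map_natCast, map_intCast, ← map_natCast ratToA, ← map_mul,
      Rat.den_mul_eq_num, map_intCast]
  have h2 := zhatToA_injective h1
  have h3 : ((x.num : ℤ) : ZMod x.den) =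
      (x.den : ZMod x.den) * (show ZMod x.den from z.1 ⟨x.den, x.den_pos⟩) :=
    congrFun (congrArg Subtype.val h2) ⟨x.den, x.den_pos⟩
  rw [ZMod.natCast_self, zero_mul, ZMod.intCast_zmod_eq_zero_iff_dvd] at h3
  refine ⟨x.num / x.den, ?_⟩
  obtain ⟨b, hb⟩ := h3
  have hd : (x.den : ℤ) ≠ 0 := by exact_mod_cast x.den_nz
  rw [hb, Int.mul_ediv_cancel_left _ hd]
  have := Rat.den_mul_eq_num x
  rw [hb] at this
  push_cast at this
  have hd' : (x.den : ℚ) ≠ 0 := by exact_mod_cast x.den_nz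
  exact (mul_left_cancel₀ hd' this).symm

lemma main_aux {Z A : Type*} [CommRing Z] [CommRing A] (zA : Z →+* A) (rA : ℚ →+* A)
    (hRatInt : ∀ (x : ℚ) (z : Z), rA x = zA z → ∃ a : ℤ, (a : ℚ) = x)
    (d r : ℕ) (hd : 1 ≤ d) (hr : r ≤ d - 1) :
    ∀ k ∈ (GSp d Z).map (glMap zA),
      ((∃ p ∈ Set.image (glMap rA) (PrSet d r ℚ), ∃ q ∈ QrSet d r A, k = p * q) ↔
        (∃ p q : GL (Fin (2 * d)) A,
          p ∈ Set.image (glMap rA) (PrSet d r ℚ) ∧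
          (∃ p₀ : GL (Fin (2 * d)) ℤ, glMap (Int.castRingHom A) p₀ = p) ∧
          q ∈ QrSet d r A ∧ q ∈ (GSp d Z).map (glMap zA) ∧ k = p * q)) := by
  intro k hk
  constructor
  swap
  · rintro ⟨p, q, hp, _, hq, _, hkpq⟩
    exact ⟨p, hp, q, hq, hkpq⟩
  rintro ⟨_, ⟨p, ⟨hpG, hpT⟩, rfl⟩, q, hqQ, rfl⟩
  have hrd : r ≤ d := by omega
  obtain ⟨c, hqs, hqT, hq0, hq2⟩ := id hqQ
  have hpT : BT d r (p : Matrix (Fin (2 * d)) (Fin (2 * d)) ℚ) := hpT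
  have hqT : BT d r (q : Matrix (Fin (2 * d)) (Fin (2 * d)) A) := hqT
  have hpiT := BT.inv p hpT
  have hqiT := BT.inv q hqT
  obtain ⟨K, hK, hKeq⟩ := id hk
  have hPT : BT d r ((glMap rA p : GL _ A) : Matrix (Fin (2 * d)) (Fin (2 * d)) A) := by
    intro i j hij
    rw [glMap_coe, Matrix.map_apply, hpT i j hij, map_zero]
  have hqi2 : ∀ i j : Fin (2 * d), blk d r (i : ℕ) = 2 → blk d r (j : ℕ) = 2 →
      ((q⁻¹ : GL _ A) : Matrix (Fin (2 * d)) (Fin (2 * d)) A) i j = if i = j then 1 else 0 := by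
    intro i j hi hj
    rw [← block_two_mul_one d r _ _ hqiT hq2 i j hi hj, ← Units.val_mul, inv_mul_cancel,
      Units.val_one, Matrix.one_apply]
  have hkB : ∀ i j : Fin (2 * d), blk d r (i : ℕ) = 2 → blk d r (j : ℕ) = 2 →
      ((glMap rA p * q : GL _ A) : Matrix (Fin (2 * d)) (Fin (2 * d)) A) i j
        = rA ((p : Matrix (Fin (2 * d)) (Fin (2 * d)) ℚ) i j) := by
    intro i j hi hj
    rw [Units.val_mul, block_two_mul_one d r _ _ hPT hq2 i j hi hj]
    rfl
  have hG : ∀ i j : Fin (2 * d), blk d r (i : ℕ) = 2 → blk d r (j : ℕ) = 2 →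
      ∃ a : ℤ, (a : ℚ) = (p : Matrix (Fin (2 * d)) (Fin (2 * d)) ℚ) i j := by
    intro i j hi hj
    apply hRatInt _ ((K : Matrix (Fin (2 * d)) (Fin (2 * d)) Z) i j)
    rw [← hkB i j hi hj, ← hKeq]
    rfl
  have hH : ∀ i j : Fin (2 * d), blk d r (i : ℕ) = 2 → blk d r (j : ℕ) = 2 →
      ∃ a : ℤ, (a : ℚ) = ((p⁻¹ : GL _ ℚ) : Matrix (Fin (2 * d)) (Fin (2 * d)) ℚ) i j := by
    intro i j hi hj
    apply hRatInt _ (((K⁻¹ : GL _ Z) : Matrix (Fin (2 * d)) (Fin (2 * d)) Z) i j)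
    have e : glMap zA K⁻¹ = q⁻¹ * glMap rA p⁻¹ := by
      rw [map_inv, map_inv, hKeq, _root_.mul_inv_rev]
    have e1 := congrArg (fun g : GL (Fin (2 * d)) A =>
      (g : Matrix (Fin (2 * d)) (Fin (2 * d)) A) i j) e
    simp only [Units.val_mul] at e1
    rw [block_two_one_mul d r _ _ hqiT hqi2 i j hi] at e1
    exact e1.symm
  choose G hG using hG
  choose H hH using hH
  let gZ : Matrix (Fin (2 * d)) (Fin (2 * d)) ℤ := fun i j =>
    if h : blk d r (i : ℕ) = 2 ∧ blk d r (j : ℕ) = 2 then G i j h.1 h.2 else 0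
  let hZ : Matrix (Fin (2 * d)) (Fin (2 * d)) ℤ := fun i j =>
    if h : blk d r (i : ℕ) = 2 ∧ blk d r (j : ℕ) = 2 then H i j h.1 h.2 else 0
  have hgZ : ∀ i j : Fin (2 * d), blk d r i = 2 → blk d r j = 2 → Int.castRingHom ℚ (gZ i j)
      = (p : Matrix (Fin (2 * d)) (Fin (2 * d)) ℚ) i j := by
    intro i j hi hj
    simp only [gZ, hi, hj, and_self, dif_pos]
    exact hG i j hi hj
  have hhZ : ∀ i j : Fin (2 * d), blk d r i = 2 → blk d r j = 2 → Int.castRingHom ℚ (hZ i j)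
      = ((p⁻¹ : GL _ ℚ) : Matrix (Fin (2 * d)) (Fin (2 * d)) ℚ) i j := by
    intro i j hi hj
    simp only [hZ, hi, hj, and_self, dif_pos]
    exact hH i j hi hj
  have m1 := Dmat_map d r (Int.castRingHom ℚ) gZ hZ _ _ hrd hgZ hhZ
  have m2 := Dmat_map d r (Int.castRingHom ℚ) hZ gZ _ _ hrd hhZ hgZ
  have hinj : Function.Injective (fun M : Matrix (Fin (2 * d)) (Fin (2 * d)) ℤ =>
      M.map (Int.castRingHom ℚ)) := Matrix.map_injective Int.cast_injective
  have i1 : Dmat d r gZ hZ * Dmat d r hZ gZ = 1 := by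
    apply hinj
    simp only [Matrix.map_mul]
    rw [m1, m2, Dmat_mul d r hrd _ _ hpT (by rw [← Units.val_mul, mul_inv_cancel, Units.val_one])]
    simp
  have i2 : Dmat d r hZ gZ * Dmat d r gZ hZ = 1 := by
    apply hinj
    simp only [Matrix.map_mul]
    rw [m1, m2, Dmat_mul d r hrd _ _ hpiT (by rw [← Units.val_mul, inv_mul_cancel, Units.val_one])]
    simp
  let p₀ : GL (Fin (2 * d)) ℤ := ⟨Dmat d r gZ hZ, Dmat d r hZ gZ, i1, i2⟩
  have hp₀ : p₀ ∈ GSp d ℤ := by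
    rw [mem_GSp_iff]
    refine ⟨1, ?_⟩
    rw [Units.val_one, one_smul]
    exact Dmat_symp d r hrd gZ hZ i2
  have c1 : glMap (Int.castRingHom A) p₀ = glMap rA (glMap (Int.castRingHom ℚ) p₀) := by
    rw [glMap_comp]; congr 1; exact congrArg _ (Subsingleton.elim _ _)
  have c2 : glMap (Int.castRingHom A) p₀ = glMap zA (glMap (Int.castRingHom Z) p₀) := by
    rw [glMap_comp]; congr 1; exact congrArg _ (Subsingleton.elim _ _)
  have hPZ : glMap (Int.castRingHom A) p₀ ∈ (GSp d Z).map (glMap zA) := by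
    rw [c2]
    exact ⟨_, GSp_map _ _ hp₀, rfl⟩
  have hq'Z : (glMap (Int.castRingHom A) p₀)⁻¹ * (glMap rA p * q) ∈ (GSp d Z).map (glMap zA) :=
    mul_mem (inv_mem hPZ) hk
  have hq'G : (glMap (Int.castRingHom A) p₀)⁻¹ * (glMap rA p * q) ∈ GSp d A := by
    obtain ⟨x, hx, hxe⟩ := hq'Z
    rw [← hxe]
    exact GSp_map _ _ hx
  have hD : (((glMap (Int.castRingHom A) p₀)⁻¹ : GL _ A) :
      Matrix (Fin (2 * d)) (Fin (2 * d)) A) = (Dmat d r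
        ((p⁻¹ : GL _ ℚ) : Matrix (Fin (2 * d)) (Fin (2 * d)) ℚ)
        (p : Matrix (Fin (2 * d)) (Fin (2 * d)) ℚ)).map rA := by
    rw [c1, ← map_inv, glMap_coe, ← map_inv, glMap_coe, ← m2]
    rfl
  have hDT : BT d r (((glMap (Int.castRingHom A) p₀)⁻¹ : GL _ A) :
      Matrix (Fin (2 * d)) (Fin (2 * d)) A) := by
    rw [hD]
    intro i j hij
    rw [Matrix.map_apply, Dmat_BT d r _ _ i j hij, map_zero]
  have hq'T : BT d r (((glMap (Int.castRingHom A) p₀)⁻¹ * (glMap rA p * q) : GL _ A) :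
      Matrix (Fin (2 * d)) (Fin (2 * d)) A) := by
    rw [Units.val_mul, Units.val_mul]
    exact hDT.mul (hPT.mul hqT)
  have hq'2 : ∀ i j : Fin (2 * d), blk d r (i : ℕ) = 2 → blk d r (j : ℕ) = 2 →
      (((glMap (Int.castRingHom A) p₀)⁻¹ * (glMap rA p * q) : GL _ A) :
      Matrix (Fin (2 * d)) (Fin (2 * d)) A) i j = if i = j then 1 else 0 := by
    intro i j hi hj
    have e : ∀ l : Fin (2 * d), (((glMap (Int.castRingHom A) p₀)⁻¹ : GL _ A) :
        Matrix (Fin (2 * d)) (Fin (2 * d)) A) i l *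
        ((glMap rA p * q : GL _ A) : Matrix (Fin (2 * d)) (Fin (2 * d)) A) l j
        = rA (((p⁻¹ : GL _ ℚ) : Matrix (Fin (2 * d)) (Fin (2 * d)) ℚ) i l *
          (p : Matrix (Fin (2 * d)) (Fin (2 * d)) ℚ) l j) := by
      intro l
      by_cases hl : blk d r l = 2
      · rw [hkB l j hl hj, hD, Matrix.map_apply, Dmat_two _ _ _ _ _ _ hi hl, map_mul]
      · have := blk_le_two d r l
        rw [hDT i l (by omega), hpiT i l (by omega), zero_mul, zero_mul, map_zero]
    rw [Units.val_mul, Matrix.mul_apply, Finset.sum_congr rfl (fun l _ => e l), ← map_sum,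
      ← Matrix.mul_apply, ← Units.val_mul, inv_mul_cancel, Units.val_one, Matrix.one_apply]
    split_ifs <;> simp
  obtain ⟨c', hc'⟩ := (mem_GSp_iff _).1 hq'G
  refine ⟨glMap (Int.castRingHom A) p₀,
    (glMap (Int.castRingHom A) p₀)⁻¹ * (glMap rA p * q), ?_, ⟨p₀, rfl⟩, ?_, hq'Z, ?_⟩
  · rw [c1]
    refine ⟨_, ⟨GSp_map _ _ hp₀, ?_⟩, rfl⟩
    intro i j hij
    rw [glMap_coe, Matrix.map_apply]
    rw [show (p₀ : Matrix (Fin (2 * d)) (Fin (2 * d)) ℤ) i j = 0 from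
      Dmat_BT d r gZ hZ i j hij, map_zero]
  · exact ⟨c', hc', hq'T, fun i j hi hj =>
      block_zero_of_two d r hrd _ _ hq'T hc' hq'2 i j hi hj, hq'2⟩
  · rw [mul_inv_cancel_left]

end helpers

/-- `P_r(ℚ)Q_r(𝔸_f) ∩ GSp_{2d}(Ẑ) = P_r(ℤ) · Q_r(Ẑ)`, where
`P_r(ℤ) = P_r(ℚ) ∩ GL_{2d}(ℤ)` and `Q_r(Ẑ) = Q_r(𝔸_f) ∩ GSp_{2d}(Ẑ)`. -/
theorem Pr_Qr_intersect_integral (d r : ℕ) (hd : 1 ≤ d) (hr : r ≤ d - 1) :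
    ∀ k ∈ GSpZinA d,
      ((∃ p ∈ PrQinA d r, ∃ q ∈ QrSet d r AQf, k = p * q) ↔
        (∃ p q : GL (Fin (2 * d)) AQf,
          p ∈ PrQinA d r ∧ (∃ p₀ : GL (Fin (2 * d)) ℤ, glMap (Int.castRingHom AQf) p₀ = p) ∧
          q ∈ QrSet d r AQf ∧ q ∈ GSpZinA d ∧ k = p * q)) := by
  exact main_aux zhatToA ratToA rat_integral d r hd hr
end
end
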